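/- Fix a triangulation T of an (n+3)-gon and let a, b be any pair of vertices of the polygon. Let θ̃_i = wt(σ_i) = √(x_j/(x_k x_l))·θ_i be the weight of the σ-edge of the i-th triangle. Then: (a) λ_{a,b} belongs to ℝ[x_1^{±1}, …, x_{2n+3}^{±1} | θ̃_1, …, θ̃_{n+1}]; i.e., every term of λ_{a,b} is a product of a Laurent monomial in the x_i and a monomial in the θ̃_i. (b) λ_{a,b} belongs to ℝ[x_1^{±1/2}, …, x_{2n+3}^{±1/2} | θ_1, …, θ_{n+1}]; i.e., every term of λ_{a,b} is a product of a Laurent monomial in the square roots of the x_i and a monomial in the θ_i. -/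

import Mathlib

namespace SuperTeich

open Sum

/-!  Decorated super-Teichmüller theory of a marked disk (polygon), after
Penner–Zeitlin, following Musiker–Ovenhouse–Zhang.

The polygon has `N` vertices `0, 1, …, N-1` (type `Fin N`) in counterclockwise
convex position.  Edges/arcs are unordered pairs `Sym2 (Fin N)`; for an oriented
diagonal `u → v` with `u < v`, its left side consists of the vertices strictly
between `u` and `v`.  A state consists of a triangulation (its set of internal
diagonals), an orientation of the edges (`true` on `s(u,v)`, `u < v`, means
`u → v`), a `λ`-length for each edge and a `μ`-invariant for each triangle.
`Flip` is the super Ptolemy transformation of states.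

The odd quantities live in an ambient `ℚ`-algebra `A` together with a positive
cone `Pos` of central invertible even elements and a coherent multiplicative
choice of square roots `sqrt` on it (encoding the distinguished square roots
with positive body). -/

/-- Arcs/edges of the `N`-gon: unordered pairs of vertices. -/
abbrev Edg (N : ℕ) := Sym2 (Fin N)

/-- Boundary edges of the polygon: pairs of cyclically consecutive vertices. -/
def isBnd {N : ℕ} [NeZero N] (e : Edg N) : Prop := ∃ i : Fin N, e = s(i, i + 1)

/-- Two arcs of the convex polygon cross (in their interiors). -/
def crossE {N : ℕ} (e f : Edg N) : Prop :=
  ∃ p q r t : Fin N, p < q ∧ q < r ∧ r < t ∧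
    ((e = s(p, r) ∧ f = s(q, t)) ∨ (f = s(p, r) ∧ e = s(q, t)))

/-- `e` is an edge of the triangulation with set of internal diagonals `D`. -/
def isEdgeOf {N : ℕ} [NeZero N] (D : Finset (Edg N)) (e : Edg N) : Prop :=
  isBnd e ∨ e ∈ D

/-- `D` is the set of internal diagonals of a triangulation of the `N`-gon:
`N - 3` pairwise noncrossing diagonals. -/
def IsTriangulation {N : ℕ} [NeZero N] (D : Finset (Edg N)) : Prop :=
  D.card + 3 = N ∧ (∀ e ∈ D, ¬ isBnd e ∧ ¬ e.IsDiag) ∧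
    ∀ e ∈ D, ∀ f ∈ D, ¬ crossE e f

/-- `t` is (the vertex set of) a triangle of the triangulation `D`. -/
def IsTri {N : ℕ} [NeZero N] (D : Finset (Edg N)) (t : Finset (Fin N)) : Prop :=
  t.card = 3 ∧ ∀ u ∈ t, ∀ v ∈ t, u ≠ v → isEdgeOf D s(u, v)

/-- A state of the polygon: a triangulation with a spin structure representative
(an orientation of the edges) and the associated `λ`-lengths (even, attached to
edges) and `μ`-invariants (odd, attached to triangles). -/
structure PState (A : Type*) (N : ℕ) where
  diag : Finset (Edg N)
  ori : Edg N → Bool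
  lam : Edg N → A
  mu : Finset (Fin N) → A

/-- The super Ptolemy transformation (flip) of states.  The flipped diagonal is
`s(p,r)`; the apexes of its two adjacent triangles are `j` (between `p` and `r`)
and `l` (outside).  With respect to the orientation of `s(p,r)`, `θ` is the
`μ`-invariant of the triangle on its left and `σ` of the triangle on its right,
and the quadrilateral's sides are `aa, bb, cc, dd` in counterclockwise order
starting at the tail of the oriented diagonal.  The relations imposed are
`e·f = ac + bd + √(abcd)·σθ`, `θ'·√(ac+bd) = θ√(bd) + σ√(ac)`,
`σ'·√(ac+bd) = σ√(bd) − θ√(ac)`, where `θ'` (resp. `σ'`) is the triangle on the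
left (resp. right) of the new oriented diagonal, which goes from the `σ`-side
apex to the `θ`-side apex; the side `bb` (joining the `θ`-apex to the head of
the old diagonal) has its orientation reversed, and all other data are
unchanged. -/
def Flip {A : Type*} [Ring A] {N : ℕ} [NeZero N] (Pos : Set A) (sqrt : A → A)
    (st st' : PState A N) : Prop :=
  ∃ p j r l : Fin N, p < j ∧ j < r ∧ (l < p ∨ r < l) ∧
    s(p, r) ∈ st.diag ∧
    IsTri st.diag {p, j, r} ∧ IsTri st.diag {p, r, l} ∧
    st'.diag = insert s(j, l) (st.diag.erase s(p, r)) ∧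
    (let ori := st.ori s(p, r)
     let θ := if ori then st.mu {p, j, r} else st.mu {p, r, l}
     let σ := if ori then st.mu {p, r, l} else st.mu {p, j, r}
     let θT : Finset (Fin N) := if ori then {p, j, l} else {j, r, l}
     let σT : Finset (Fin N) := if ori then {j, r, l} else {p, j, l}
     let aa := if ori then st.lam s(p, j) else st.lam s(r, l)
     let bb := if ori then st.lam s(j, r) else st.lam s(l, p)
     let cc := if ori then st.lam s(r, l) else st.lam s(p, j)
     let dd := if ori then st.lam s(l, p) else st.lam s(j, r)
     let bEdge : Edg N := if ori then s(j, r) else s(l, p)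
     st.lam s(p, r) * st'.lam s(j, l)
         = aa * cc + bb * dd + sqrt (aa * bb * cc * dd) * (σ * θ) ∧
     st'.lam s(j, l) ∈ Pos ∧
     st'.mu θT * sqrt (aa * cc + bb * dd) = θ * sqrt (bb * dd) + σ * sqrt (aa * cc) ∧
     st'.mu σT * sqrt (aa * cc + bb * dd) = σ * sqrt (bb * dd) - θ * sqrt (aa * cc) ∧
     (∀ e : Edg N, e ≠ s(j, l) → st'.lam e = st.lam e) ∧
     (∀ t : Finset (Fin N), t ≠ θT → t ≠ σT → st'.mu t = st.mu t) ∧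
     (∀ e : Edg N, e ≠ s(j, l) → e ≠ bEdge → st'.ori e = st.ori e) ∧
     st'.ori bEdge = ! st.ori bEdge ∧
     st'.ori s(j, l) = (if ori then decide (l < j) else decide (j < l)))

/-! Decorate the vertices of the polygon by vectors of super Minkowski space `E^{2|1}`. Up to sign,
the `λ`-length of an arc is then the symplectic pairing of the vectors at its ends, and the
`μ`-invariant of a triangle is a normalized odd invariant of the vectors at its corners. Every
initial state is realized by such vectors, one apex at a time, and the super Ptolemy relations are
identities between pairings and odd invariants, so that flips preserve the realization and `λ_{a,b}`
is, up to sign, the pairing of the vectors at `a` and `b`. The same identities, divided by the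
pairing along the common edge of two triangles, carry the pairings and odd invariants involving `a`
from each triangle met by the arc to the next. The only denominators are initial `λ`-lengths, and
each of the two subrings contains the initial odd invariants `√(x_j x_k x_l) θ_i = (x_k x_l) θ̃_i`
already. -/

section SquareRoots

variable {A : Type*} [Ring A] {Pos : Set A} {sqrt : A → A}

/-- A set of central invertible elements, closed under sums, products and inverses, with a
multiplicative choice of square roots inside it: the abstract form of "even elements with
positive body". -/
structure IsSqrtCone (Pos : Set A) (sqrt : A → A) : Prop where
  add_mem : ∀ x ∈ Pos, ∀ y ∈ Pos, x + y ∈ Pos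
  mul_mem : ∀ x ∈ Pos, ∀ y ∈ Pos, x * y ∈ Pos
  inverse_mem : ∀ x ∈ Pos, Ring.inverse x ∈ Pos
  mul_comm : ∀ x ∈ Pos, ∀ y, x * y = y * x
  isUnit : ∀ x ∈ Pos, IsUnit x
  sqrt_mul_self : ∀ x ∈ Pos, sqrt x * sqrt x = x
  sqrt_mem : ∀ x ∈ Pos, sqrt x ∈ Pos
  sqrt_mul : ∀ x ∈ Pos, ∀ y ∈ Pos, sqrt (x * y) = sqrt x * sqrt y

namespace IsSqrtCone

variable (hPos : IsSqrtCone Pos sqrt) {x y z : A}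

include hPos

theorem mul_inverse_cancel (hx : x ∈ Pos) : x * Ring.inverse x = 1 :=
  Ring.mul_inverse_cancel x (hPos.isUnit x hx)

theorem sqrt_one (hone : (1 : A) ∈ Pos) : sqrt 1 = 1 := by
  have h := hPos.sqrt_mul 1 hone 1 hone
  rw [mul_one] at h
  exact ((hPos.isUnit _ (hPos.sqrt_mem 1 hone)).mul_eq_left.1 h.symm)

theorem sqrt_mul_sqrt_inverse (hx : x ∈ Pos) : sqrt x * sqrt (Ring.inverse x) = 1 := by
  have hx' := hPos.inverse_mem x hx
  rw [← hPos.sqrt_mul x hx _ hx', hPos.mul_inverse_cancel hx]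
  exact hPos.sqrt_one (hPos.mul_inverse_cancel hx ▸ hPos.mul_mem x hx _ hx')

theorem mul_sqrt_mul_inverse (hx : x ∈ Pos) (hz : z ∈ Pos) :
    x * sqrt (z * Ring.inverse x) = sqrt x * sqrt z := by
  rw [hPos.sqrt_mul z hz _ (hPos.inverse_mem x hx)]
  calc x * (sqrt z * sqrt (Ring.inverse x))
      = sqrt x * sqrt x * (sqrt z * sqrt (Ring.inverse x)) := by rw [hPos.sqrt_mul_self x hx]
    _ = sqrt x * sqrt z * (sqrt x * sqrt (Ring.inverse x)) := by
        rw [mul_assoc, mul_assoc, ← mul_assoc (sqrt x) (sqrt z), ← mul_assoc (sqrt z),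
          hPos.mul_comm _ (hPos.sqrt_mem x hx) (sqrt z)]
    _ = sqrt x * sqrt z := by rw [hPos.sqrt_mul_sqrt_inverse hx, mul_one]

theorem sqrt_mul_sqrt_mul_sqrt (hx : x ∈ Pos) (hy : y ∈ Pos) (hz : z ∈ Pos) :
    sqrt x * sqrt y * sqrt z = x * z * sqrt (y * Ring.inverse (x * z)) := by
  rw [hPos.mul_sqrt_mul_inverse (hPos.mul_mem x hx z hz) hy, hPos.sqrt_mul x hx z hz, mul_assoc,
    mul_assoc, hPos.mul_comm _ (hPos.sqrt_mem y hy)]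

theorem inverse_eq_inverse_sqrt_mul_self (hx : x ∈ Pos) :
    Ring.inverse x = Ring.inverse (sqrt x) * Ring.inverse (sqrt x) := by
  rw [← Ring.mul_inverse_rev' (Commute.refl (sqrt x)), hPos.sqrt_mul_self x hx]

end IsSqrtCone

end SquareRoots

section SuperSubring

/-- A supercommutative subring of a ring, given by its even and odd parts; odd elements are
required to square to zero, so that no division by two is needed. -/
structure SuperSubring (A : Type*) [Ring A] where
  even : Subring A
  odd : AddSubgroup A
  even_comm : ∀ x ∈ even, ∀ y ∈ even, x * y = y * x
  even_mul_odd : ∀ x ∈ even, ∀ y ∈ odd, x * y ∈ odd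
  even_comm_odd : ∀ x ∈ even, ∀ y ∈ odd, x * y = y * x
  odd_mul_odd : ∀ x ∈ odd, ∀ y ∈ odd, x * y ∈ even
  odd_mul_self : ∀ x ∈ odd, x * x = 0

/-- The multiplication of odd elements in a supercommutative ring with even part `E` and odd
part `O`. -/
class OddProduct (E O : Type*) [CommRing E] [AddCommGroup O] [Module E O] where
  mul : O →ₗ[E] O →ₗ[E] E
  isAlt_mul : mul.IsAlt
  mul_smul_rotate : ∀ x y z, mul x y • z = mul y z • x

namespace SuperSubring

variable {A : Type*} [Ring A]

section Instances

variable (S : SuperSubring A)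

instance : CommRing S.even where
  mul_comm x y := Subtype.ext (S.even_comm x x.2 y y.2)

instance : Module S.even S.odd where
  smul e x := ⟨e * x, S.even_mul_odd e e.2 x x.2⟩
  one_smul _ := Subtype.ext (one_mul _)
  mul_smul _ _ _ := Subtype.ext (mul_assoc _ _ _)
  smul_zero _ := Subtype.ext (mul_zero _)
  smul_add _ _ _ := Subtype.ext (mul_add _ _ _)
  add_smul _ _ _ := Subtype.ext (add_mul _ _ _)
  zero_smul _ := Subtype.ext (zero_mul _)

theorem coe_smul (e : S.even) (x : S.odd) : ((e • x : S.odd) : A) = e * x := rfl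

instance : OddProduct S.even S.odd where
  mul := LinearMap.mk₂ _ (fun x y => ⟨x * y, S.odd_mul_odd x x.2 y y.2⟩)
    (fun _ _ _ => Subtype.ext (add_mul _ _ _))
    (fun _ _ _ => Subtype.ext (mul_assoc _ _ _))
    (fun _ _ _ => Subtype.ext (mul_add _ _ _))
    (fun c x y => Subtype.ext <| by
      change (x : A) * (c * y) = c * (x * y)
      rw [← mul_assoc, ← S.even_comm_odd c c.2 x x.2, mul_assoc])
  isAlt_mul x := Subtype.ext (S.odd_mul_self x x.2)
  mul_smul_rotate x y z := Subtype.ext <| by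
    change (x : A) * y * z = y * z * x
    rw [mul_assoc, S.even_comm_odd _ (S.odd_mul_odd y y.2 z z.2) x x.2]

theorem coe_mul_odd (x y : S.odd) : ((OddProduct.mul x y : S.even) : A) = x * y := rfl

end Instances

variable {s : Set A}

/-- The even part of the supercommutative subring generated by the centre and by odd elements
`s`. -/
def evenClosure (s : Set A) : Subring A :=
  Subring.closure (Subring.center A ∪ Set.image2 (· * ·) s s)

/-- The odd part of the supercommutative subring generated by the centre and by odd elements
`s`. -/
def oddClosure (s : Set A) : AddSubgroup A :=
  AddSubgroup.closure (Set.image2 (· * ·) (evenClosure s) s)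

variable (hs : ∀ x ∈ s, ∀ y ∈ s, x * y = -(y * x))

include hs

theorem evenClosure_le_centralizer :
    evenClosure s ≤ Subring.centralizer s := by
  refine Subring.closure_le.2 ?_
  rintro _ (hz | ⟨x, hx, y, hy, rfl⟩)
  · exact Subring.mem_centralizer_iff.2 fun w _ => Subring.mem_center_iff.1 hz w
  · refine Subring.mem_centralizer_iff.2 fun w hw => ?_
    change w * (x * y) = x * y * w
    rw [← mul_assoc, hs w hw x hx, neg_mul, mul_assoc, hs w hw y hy, mul_neg, neg_neg, mul_assoc]

theorem evenClosure_le_centralizer_self :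
    evenClosure s ≤ Subring.centralizer (evenClosure s) := by
  have hcomm := evenClosure_le_centralizer hs
  refine Subring.closure_le.2 ?_
  rintro _ (hz | ⟨x, hx, y, hy, rfl⟩)
  · exact Subring.mem_centralizer_iff.2 fun w _ => Subring.mem_center_iff.1 hz w
  · refine mul_mem ?_ ?_ <;>
      exact Subring.mem_centralizer_iff.2 fun w hw =>
        (Subring.mem_centralizer_iff.1 (hcomm hw) _ ‹_›).symm

theorem oddClosure_le_centralizer :
    oddClosure s ≤ (Subring.centralizer (evenClosure s : Set A)).toAddSubgroup := by
  refine (AddSubgroup.closure_le _).2 ?_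
  rintro _ ⟨e, he, x, hx, rfl⟩
  have hcomm := evenClosure_le_centralizer hs
  exact (Subring.centralizer _).mul_mem (evenClosure_le_centralizer_self hs he)
    (Subring.mem_centralizer_iff.2 fun w hw => (Subring.mem_centralizer_iff.1 (hcomm hw) _ hx).symm)

theorem oddClosure_mul_mem {x y : A}
    (hx : x ∈ oddClosure s) (hy : y ∈ oddClosure s) : x * y ∈ evenClosure s := by
  induction hx, hy using AddSubgroup.closure_induction₂ with
  | mem x y hx hy =>
    obtain ⟨e, he, x, hx, rfl⟩ := hx
    obtain ⟨f, hf, y, hy, rfl⟩ := hy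
    have hxf := Subring.mem_centralizer_iff.1 (evenClosure_le_centralizer hs hf) x hx
    change e * x * (f * y) ∈ _
    rw [mul_assoc, ← mul_assoc x, hxf, mul_assoc f]
    exact mul_mem he (mul_mem hf (Subring.subset_closure (Or.inr ⟨x, hx, y, hy, rfl⟩)))
  | zero_left => simp
  | zero_right => simp
  | add_left _ _ _ _ _ _ h h' => exact add_mul _ _ (_ : A) ▸ add_mem h h'
  | add_right _ _ _ _ _ _ h h' => exact mul_add _ _ (_ : A) ▸ add_mem h h'
  | neg_left _ _ _ _ h => exact neg_mul _ (_ : A) ▸ neg_mem h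
  | neg_right _ _ _ _ h => exact mul_neg _ (_ : A) ▸ neg_mem h

theorem oddClosure_mul_anticomm {x y : A}
    (hx : x ∈ oddClosure s) (hy : y ∈ oddClosure s) : x * y = -(y * x) := by
  induction hx, hy using AddSubgroup.closure_induction₂ with
  | mem x y hx hy =>
    obtain ⟨e, he, x, hx, rfl⟩ := hx
    obtain ⟨f, hf, y, hy, rfl⟩ := hy
    have hxf := Subring.mem_centralizer_iff.1 (evenClosure_le_centralizer hs hf) x hx
    have hye := Subring.mem_centralizer_iff.1 (evenClosure_le_centralizer hs he) y hy
    have hef := Subring.mem_centralizer_iff.1 (evenClosure_le_centralizer_self hs he) f hf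
    change e * x * (f * y) = -(f * y * (e * x))
    rw [mul_assoc, ← mul_assoc x, hxf, mul_assoc f, hs x hx y hy, mul_assoc f, ← mul_assoc y,
      hye, mul_assoc e, ← mul_assoc f, hef, mul_assoc, mul_neg, mul_neg]
  | zero_left => simp
  | zero_right => simp
  | add_left _ _ _ _ _ _ h h' => rw [add_mul, mul_add, h, h', neg_add]
  | add_right _ _ _ _ _ _ h h' => rw [add_mul, mul_add, h, h', neg_add]
  | neg_left _ _ _ _ h => rw [neg_mul, mul_neg, h]
  | neg_right _ _ _ _ h => rw [neg_mul, mul_neg, h]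

theorem oddClosure_mul_self
    (hsq : ∀ x ∈ s, x * x = 0) {x : A} (hx : x ∈ oddClosure s) : x * x = 0 := by
  induction hx using AddSubgroup.closure_induction with
  | mem x hx =>
    obtain ⟨e, he, x, hx, rfl⟩ := hx
    have hxe := Subring.mem_centralizer_iff.1 (evenClosure_le_centralizer hs he) x hx
    change e * x * (e * x) = 0
    rw [mul_assoc, ← mul_assoc x, hxe, mul_assoc e x, hsq x hx, mul_zero, mul_zero]
  | zero => simp
  | add x y hx hy hxx hyy =>
    rw [add_mul, mul_add, mul_add, hxx, hyy, oddClosure_mul_anticomm hs hx hy]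
    abel
  | neg x _ hxx => rw [neg_mul_neg, hxx]

theorem exists_center_le_even_and_subset_odd
    (hsq : ∀ x ∈ s, x * x = 0) :
    ∃ S : SuperSubring A, Subring.center A ≤ S.even ∧ s ⊆ S.odd := by
  refine ⟨⟨evenClosure s, oddClosure s, fun x hx y hy => ?_, fun x hx y hy => ?_,
    fun x hx y hy => ?_, fun x hx y hy => oddClosure_mul_mem hs hx hy,
    fun x hx => oddClosure_mul_self hs hsq hx⟩, fun z hz => Subring.subset_closure (Or.inl hz),
    fun x hx => AddSubgroup.subset_closure ⟨1, one_mem _, x, hx, one_mul x⟩⟩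
  · exact Subring.mem_centralizer_iff.1 (evenClosure_le_centralizer_self hs hy) x hx
  · have hmap : oddClosure s ≤ (oddClosure s).comap (AddMonoidHom.mulLeft x) := by
      refine (AddSubgroup.closure_le _).2 ?_
      rintro _ ⟨e, he, u, hu, rfl⟩
      exact AddSubgroup.subset_closure ⟨x * e, mul_mem hx he, u, hu, mul_assoc x e u⟩
    exact hmap hy
  · exact Subring.mem_centralizer_iff.1 (oddClosure_le_centralizer hs hy) x hx

end SuperSubring

end SuperSubring

section SuperVectors

variable {E O : Type*} [CommRing E] [AddCommGroup O] [Module E O] [OddProduct E O]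

local notation "β" => OddProduct.mul (E := E) (O := O)

namespace OddProduct

theorem mul_swap (x y : O) : β x y = -β y x := (isAlt_mul.neg y x).symm

theorem mul_self_smul (x y : O) : β x y • x = 0 := by
  rw [mul_swap, neg_smul, mul_smul_rotate, isAlt_mul, zero_smul, neg_zero]

theorem mul_smul_self (x y : O) : β x y • y = 0 := by
  rw [mul_smul_rotate, isAlt_mul, zero_smul]

theorem mul_mul_mul_cyclic (x y z w : O) : β x y * β z w = β y z * β x w := by
  simpa only [map_smul, LinearMap.smul_apply, smul_eq_mul] using
    congrArg (β · w) (mul_smul_rotate (E := E) x y z)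

theorem mul_mul_mul_left (x y z : O) : β x y * β x z = 0 := by
  rw [mul_swap, neg_mul, mul_mul_mul_cyclic, isAlt_mul, zero_mul, neg_zero]

theorem mul_mul_mul_right (x y z : O) : β x y * β z y = 0 := by
  rw [mul_swap x, mul_swap z, neg_mul_neg, mul_mul_mul_left]

theorem mul_mul_mul_middle (x y z : O) : β x y * β y z = 0 := by
  rw [mul_mul_mul_cyclic, isAlt_mul, zero_mul]

end OddProduct

open OddProduct

/-- Vectors of super Minkowski space `E^{2|1}`; decorated ideal points are such vectors up to
sign. -/
abbrev SuperVec (E O : Type*) := E × E × O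

namespace SuperVec

/-- The `OSp(1|2)`-invariant symplectic pairing; up to sign, the `λ`-length of an arc is the
pairing of the vectors at its endpoints. -/
def pairing (u v : SuperVec E O) : E := u.1 * v.2.1 - u.2.1 * v.1 + β u.2.2 v.2.2

/-- The odd `OSp(1|2)`-invariant of three vectors; up to sign and the square roots of the three
`λ`-lengths, the `μ`-invariant of a triangle is the invariant of the vectors at its vertices. -/
def oddInvariant (u v w : SuperVec E O) : O :=
  pairing v w • u.2.2 - pairing u w • v.2.2 + pairing u v • w.2.2 - β u.2.2 v.2.2 • w.2.2

theorem pairing_swap (u v : SuperVec E O) : pairing u v = -pairing v u := by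
  simp only [pairing, mul_swap u.2.2 v.2.2]
  ring

theorem pairing_neg_left (u v : SuperVec E O) : pairing (-u) v = -pairing u v := by
  simp only [pairing, Prod.fst_neg, Prod.snd_neg, map_neg, LinearMap.neg_apply]
  ring

theorem pairing_neg_right (u v : SuperVec E O) : pairing u (-v) = -pairing u v := by
  rw [pairing_swap, pairing_neg_left, ← pairing_swap]

theorem oddInvariant_rotate (u v w : SuperVec E O) :
    oddInvariant v w u = oddInvariant u v w := by
  simp only [oddInvariant]
  rw [pairing_swap w u, pairing_swap v u, mul_smul_rotate u.2.2 v.2.2 w.2.2]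
  module

theorem oddInvariant_swap (u v w : SuperVec E O) :
    oddInvariant v u w = -oddInvariant u v w := by
  simp only [oddInvariant]
  rw [pairing_swap v u, mul_swap v.2.2 u.2.2]
  module

theorem pairing_self (u : SuperVec E O) : pairing u u = 0 := by
  rw [pairing, isAlt_mul (E := E) u.2.2]
  ring

theorem oddInvariant_self_left (u v : SuperVec E O) : oddInvariant u u v = 0 := by
  rw [oddInvariant, pairing_self, isAlt_mul (E := E) u.2.2]
  module

theorem oddInvariant_self_right (u v : SuperVec E O) : oddInvariant u v v = 0 := by
  rw [← oddInvariant_rotate, oddInvariant_self_left]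

theorem oddInvariant_neg_right (u v w : SuperVec E O) :
    oddInvariant u v (-w) = -oddInvariant u v w := by
  simp only [oddInvariant, pairing_neg_right, Prod.snd_neg]
  module

theorem oddInvariant_neg_left (u v w : SuperVec E O) :
    oddInvariant (-u) v w = -oddInvariant u v w := by
  rw [← oddInvariant_rotate, oddInvariant_neg_right, oddInvariant_rotate]

theorem oddInvariant_neg_middle (u v w : SuperVec E O) :
    oddInvariant u (-v) w = -oddInvariant u v w := by
  rw [← oddInvariant_rotate, oddInvariant_neg_left, oddInvariant_rotate]

theorem pairing_units_smul (ε δ : ℤˣ) (u v : SuperVec E O) :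
    pairing (ε • u) (δ • v) = (ε * δ) • pairing u v := by
  rcases Int.units_eq_one_or ε with rfl | rfl <;> rcases Int.units_eq_one_or δ with rfl | rfl <;>
    simp only [one_smul, Units.neg_smul, pairing_neg_left, pairing_neg_right, mul_one, mul_neg,
      neg_neg]

theorem oddInvariant_units_smul (ε δ κ : ℤˣ) (u v w : SuperVec E O) :
    oddInvariant (ε • u) (δ • v) (κ • w) = (ε * δ * κ) • oddInvariant u v w := by
  rcases Int.units_eq_one_or ε with rfl | rfl <;> rcases Int.units_eq_one_or δ with rfl | rfl <;>
    rcases Int.units_eq_one_or κ with rfl | rfl <;>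
    simp only [one_smul, Units.neg_smul, oddInvariant_neg_left, oddInvariant_neg_middle,
      oddInvariant_neg_right, mul_one, mul_neg, neg_neg]

theorem pairing_ptolemy (p q a u : SuperVec E O) :
    pairing p q * pairing p q * pairing a u =
      pairing p q * (pairing a q * pairing p u - pairing a p * pairing q u)
        + β (oddInvariant a p q) (oddInvariant p q u) := by
  obtain ⟨a₁, a₂, a⟩ := a
  obtain ⟨p₁, p₂, p⟩ := p
  obtain ⟨q₁, q₂, q⟩ := q
  obtain ⟨u₁, u₂, u⟩ := u
  simp only [oddInvariant, pairing, map_add, map_sub, LinearMap.add_apply, LinearMap.sub_apply,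
    map_smul, LinearMap.smul_apply, smul_eq_mul, (isAlt_mul (E := E)).self_eq_zero, mul_swap q p]
  have h₁ : β a q * β p u = -(β p q * β a u) := by
    rw [mul_mul_mul_cyclic, mul_swap q p, neg_mul]
  have h₂ : β p q * β p q = 0 := mul_mul_mul_left p q q
  have h₃ : β p q * β q u = 0 := mul_mul_mul_middle p q u
  have h₄ : β p q * β a q = 0 := mul_mul_mul_right p q a
  have h₅ : β p q * β p u = 0 := mul_mul_mul_left p q u
  grind only

theorem oddInvariant_ptolemy (p q a u : SuperVec E O) :
    pairing p q • oddInvariant p a u =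
      pairing p u • oddInvariant p a q + pairing p a • oddInvariant p q u := by
  have rotate (u v : SuperVec E O) : β u.2.2 v.2.2 • p.2.2 = β p.2.2 u.2.2 • v.2.2 :=
    (mul_smul_rotate _ _ _).symm
  have vanish (u : SuperVec E O) : β p.2.2 u.2.2 • p.2.2 = 0 := mul_self_smul _ _
  simp only [oddInvariant]
  linear_combination (norm := (simp only [pairing]; module))
      pairing p q • rotate a u - pairing p u • rotate a q - pairing p a • rotate q u
    + (a.1 * u.2.1 - a.2.1 * u.1) • vanish q - (a.1 * q.2.1 - a.2.1 * q.1) • vanish u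
    - (q.1 * u.2.1 - q.2.1 * u.1) • vanish a

theorem exists_det_mul_eq_one {p q : SuperVec E O} (h : IsUnit (pairing p q)) :
    ∃ j, (p.1 * q.2.1 - p.2.1 * q.1) * j = 1 := by
  obtain ⟨i, hi⟩ := h.exists_right_inv
  have hβ : β p.2.2 q.2.2 * β p.2.2 q.2.2 = 0 := mul_mul_mul_left _ _ _
  refine ⟨i * i * (pairing p q + β p.2.2 q.2.2), ?_⟩
  have hdet : p.1 * q.2.1 - p.2.1 * q.1 = pairing p q - β p.2.2 q.2.2 :=
    (add_sub_cancel_right _ _).symm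
  rw [hdet]
  linear_combination (pairing p q * i + 1) * hi - i * i * hβ

theorem exists_oddInvariant_eq {p q : SuperVec E O} (h : IsUnit (pairing p q)) (w : O) :
    ∃ k : SuperVec E O, pairing p k = 0 ∧ pairing k q = 0 ∧ oddInvariant p k q = w := by
  obtain ⟨j, hj⟩ := exists_det_mul_eq_one h
  set d := p.1 * q.2.1 - p.2.1 * q.1 with hd
  set η : O := -(j * j) • w with hη
  let k : SuperVec E O := (β η (q.1 • p.2.2 - p.1 • q.2.2),
    β η (q.2.1 • p.2.2 - p.2.1 • q.2.2), d • η)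
  have hpk : pairing p k = 0 := by
    simp only [k, pairing, map_sub, map_smul, smul_eq_mul, mul_swap p.2.2 η]
    linear_combination hd * β η p.2.2
  have hkq : pairing k q = 0 := by
    simp only [k, pairing, map_sub, map_smul, LinearMap.smul_apply, smul_eq_mul]
    linear_combination hd * β η q.2.2
  refine ⟨k, hpk, hkq, ?_⟩
  have hdη : (d * d) • η = -w := by
    rw [hη, smul_smul, show d * d * -(j * j) = -((d * j) * (d * j)) by ring, hj]
    module
  have hβη : β p.2.2 η • q.2.2 = -(β p.2.2 q.2.2 • η) := by
    rw [mul_swap, neg_smul, mul_smul_rotate]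
  have hdet : d = pairing p q - β p.2.2 q.2.2 := (add_sub_cancel_right _ _).symm
  rw [oddInvariant, hpk, hkq]
  simp only [k, map_smul, smul_eq_mul]
  linear_combination (norm := module) - d • hβη + d • congrArg (· • η) hdet - hdη

theorem exists_apex {p q : SuperVec E O} (h : IsUnit (pairing p q)) (a c : E) (w : O) :
    ∃ k : SuperVec E O, pairing p k = a ∧ pairing k q = c ∧ oddInvariant p k q = w := by
  obtain ⟨i, hi⟩ := h.exists_right_inv
  obtain ⟨k, hpk, hkq, hk⟩ := exists_oddInvariant_eq h w
  have hpa : pairing p ((c * i) • p + (a * i) • q + k) = a := by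
    calc pairing p ((c * i) • p + (a * i) • q + k) = (a * i) * pairing p q + pairing p k := by
          simp only [pairing, Prod.fst_add, Prod.snd_add, Prod.smul_fst, Prod.smul_snd, map_add,
            map_smul, isAlt_mul (E := E) p.2.2, smul_eq_mul]
          ring
      _ = a := by linear_combination a * hi + hpk
  have hqc : pairing ((c * i) • p + (a * i) • q + k) q = c := by
    calc pairing ((c * i) • p + (a * i) • q + k) q = (c * i) * pairing p q + pairing k q := by
          simp only [pairing, Prod.fst_add, Prod.snd_add, Prod.smul_fst, Prod.smul_snd, map_add,
            map_smul, LinearMap.add_apply, LinearMap.smul_apply, isAlt_mul (E := E) q.2.2,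
            smul_eq_mul]
          ring
      _ = c := by linear_combination c * hi + hkq
  refine ⟨_, hpa, hqc, ?_⟩
  rw [← hk, oddInvariant, hpa, hqc, oddInvariant, hpk, hkq]
  have hβq : β p.2.2 q.2.2 • q.2.2 = 0 := mul_smul_self _ _
  simp only [Prod.snd_add, Prod.smul_snd, map_add, map_smul, isAlt_mul (E := E) p.2.2, smul_eq_mul]
  linear_combination (norm := module) - (a * i) • hβq - hi • (c • p.2.2) - hi • (a • q.2.2)

/-- Vectors `T, Y, H, S` at the vertices of a quadrilateral with `λ`-lengths `a², b², c², d²` of the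
sides and `e²` of the diagonal, whose two triangles have `μ`-invariants `θ` and `σ` up to a common
sign `η`, together with the data `φ²`, `θ'`, `σ'` prescribed by the super Ptolemy relations; `τ` is
the root of `a²c² + b²d²`. -/
structure IsPtolemyQuad (T Y H S : SuperVec E O) (a b c d e φ τ η : E) (θ σ θ' σ' : O) : Prop where
  sign_mul_self : η * η = 1
  pairing_TY : pairing T Y = a * a
  pairing_YH : pairing Y H = b * b
  pairing_HS : pairing H S = c * c
  pairing_TS : pairing T S = d * d
  pairing_TH : pairing T H = e * e
  odd_TYH : (a * b * e) • θ = η • oddInvariant T Y H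
  odd_THS : (e * c * d) • σ = η • oddInvariant T H S
  isUnit_diag : IsUnit e
  isUnit_root : IsUnit τ
  isUnit_add : IsUnit (φ * e + τ)
  root_mul_self : τ * τ = a * a * (c * c) + b * b * (d * d)
  new_mul_diag : e * e * (φ * φ) = a * a * (c * c) + b * b * (d * d) + a * b * c * d * β σ θ
  odd_left : τ • θ' = (b * d) • θ + (a * c) • σ
  odd_right : τ • σ' = (b * d) • σ - (a * c) • θ

namespace IsPtolemyQuad

variable {T Y H S : SuperVec E O} {a b c d e φ τ η : E} {θ σ θ' σ' : O}
  (hQ : IsPtolemyQuad T Y H S a b c d e φ τ η θ σ θ' σ')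

include hQ

theorem pairing_new : pairing Y S = φ * φ := by
  have hθσ : β (oddInvariant T Y H) (oddInvariant T H S) =
      -(e * e * (a * b * c * d) * β σ θ) := by
    have h := congrArg₂ (fun u v => β u v) hQ.odd_TYH hQ.odd_THS
    simp only [map_smul, LinearMap.smul_apply, smul_eq_mul, mul_swap θ σ] at h
    linear_combination -h - hQ.sign_mul_self * β (oddInvariant T Y H) (oddInvariant T H S)
  have hptolemy := pairing_ptolemy T H Y S
  rw [oddInvariant_swap T Y H, map_neg, LinearMap.neg_apply, hθσ, pairing_swap Y T, hQ.pairing_TH,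
    hQ.pairing_YH, hQ.pairing_TS, hQ.pairing_TY, hQ.pairing_HS] at hptolemy
  have he := hQ.isUnit_diag
  refine ((he.mul he).mul (he.mul he)).mul_left_cancel ?_
  linear_combination hptolemy - e * e * hQ.new_mul_diag

/- The even number `φ e` and its body `τ` differ by a multiple of `σθ`. -/
theorem smul_eq_smul_of_mul_smul_eq_zero {w : O} (hw : β σ θ • w = 0) : (φ * e) • w = τ • w := by
  refine sub_eq_zero.1 (hQ.isUnit_add.smul_eq_zero.1 ?_)
  have hdiff : (φ * e + τ) * (φ * e - τ) = a * b * c * d * β σ θ := by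
    linear_combination hQ.new_mul_diag - hQ.root_mul_self
  rw [← sub_smul, smul_smul, hdiff, mul_smul, hw, smul_zero]

theorem odd_TYS : (a * φ * d) • θ' = η • oddInvariant T Y S := by
  have hβθ' : β σ θ • θ' = 0 := by
    refine hQ.isUnit_root.smul_left_cancel.1 ?_
    rw [smul_comm, hQ.odd_left]
    linear_combination (norm := module)
      (b * d) • mul_smul_self (E := E) σ θ + (a * c) • mul_self_smul (E := E) σ θ
  have hptolemy := oddInvariant_ptolemy T H Y S
  rw [hQ.pairing_TH, hQ.pairing_TS, hQ.pairing_TY] at hptolemy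
  refine (hQ.isUnit_diag.mul hQ.isUnit_diag).smul_left_cancel.1 ?_
  linear_combination (norm := module) (a * d * e) • hQ.smul_eq_smul_of_mul_smul_eq_zero hβθ'
    + (a * d * e) • hQ.odd_left - η • hptolemy + (d * d) • hQ.odd_TYH + (a * a) • hQ.odd_THS

theorem odd_YHS : (b * c * φ) • σ' = η • oddInvariant Y H S := by
  have hβσ' : β σ θ • σ' = 0 := by
    refine hQ.isUnit_root.smul_left_cancel.1 ?_
    rw [smul_comm, hQ.odd_right]
    linear_combination (norm := module)
      (b * d) • mul_self_smul (E := E) σ θ - (a * c) • mul_smul_self (E := E) σ θ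
  have hptolemy := oddInvariant_ptolemy H T Y S
  rw [pairing_swap H T, pairing_swap H Y, oddInvariant_swap Y H S, oddInvariant_swap Y H T,
    oddInvariant_rotate T Y H, oddInvariant_swap T H S, hQ.pairing_TH, hQ.pairing_HS,
    hQ.pairing_YH] at hptolemy
  refine (hQ.isUnit_diag.mul hQ.isUnit_diag).smul_left_cancel.1 ?_
  linear_combination (norm := module) (b * c * e) • hQ.smul_eq_smul_of_mul_smul_eq_zero hβσ'
    + (b * c * e) • hQ.odd_right - η • hptolemy - (c * c) • hQ.odd_TYH + (b * b) • hQ.odd_THS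

end IsPtolemyQuad

end SuperVec

end SuperVectors

section Polygon

variable {N : ℕ} {a b c d t y h s u v w x z : Fin N}

/-- Four vertices of the polygon in counterclockwise order. -/
def Quad (a b c d : Fin N) : Prop := sbtw a b c ∧ sbtw a c d

namespace Quad

theorem of_lt (hab : a < b) (hbc : b < c) (hcd : c < d) : Quad a b c d :=
  ⟨Fin.sbtw_iff.2 (Or.inl ⟨hab, hbc⟩), Fin.sbtw_iff.2 (Or.inl ⟨hab.trans hbc, hcd⟩)⟩

theorem rotate (hq : Quad a b c d) : Quad b c d a := by
  simp only [Quad, Fin.sbtw_iff] at *; omega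

theorem sbtw₁₂₃ (hq : Quad a b c d) : sbtw a b c := hq.1

theorem sbtw₂₃₄ (hq : Quad a b c d) : sbtw b c d := hq.rotate.1

theorem sbtw₃₄₁ (hq : Quad a b c d) : sbtw c d a := hq.rotate.rotate.1

theorem sbtw₄₁₂ (hq : Quad a b c d) : sbtw d a b := hq.rotate.rotate.rotate.1

theorem trans_left (hq : Quad a b c d) (h : sbtw a d x) : Quad a b c x := by
  simp only [Quad, Fin.sbtw_iff] at *; omega

theorem trans_right (hq : Quad a b c d) (h : sbtw a d x) : Quad b c d x := by
  simp only [Quad, Fin.sbtw_iff] at *; omega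

end Quad

theorem Quad.crossE (hq : Quad a b c d) : crossE s(a, c) s(b, d) := by
  have hca : s(c, a) = s(a, c) := Sym2.eq_swap
  have hdb : s(d, b) = s(b, d) := Sym2.eq_swap
  simp only [Quad, Fin.sbtw_iff] at hq
  obtain h | h | h | h : (a < b ∧ b < c ∧ c < d) ∨ (b < c ∧ c < d ∧ d < a) ∨
      (c < d ∧ d < a ∧ a < b) ∨ (d < a ∧ a < b ∧ b < c) := by omega
  · exact ⟨a, b, c, d, h.1, h.2.1, h.2.2, Or.inl ⟨rfl, rfl⟩⟩
  · exact ⟨b, c, d, a, h.1, h.2.1, h.2.2, Or.inr ⟨rfl, hca.symm⟩⟩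
  · exact ⟨c, d, a, b, h.1, h.2.1, h.2.2, Or.inl ⟨hca.symm, hdb.symm⟩⟩
  · exact ⟨d, a, b, c, h.1, h.2.1, h.2.2, Or.inr ⟨hdb.symm, rfl⟩⟩

theorem sbtw_pairwise_ne (h : sbtw a b c) : a ≠ b ∧ b ≠ c ∧ c ≠ a := by
  simp only [Fin.sbtw_iff] at h; omega

theorem eq_or_quad (hx : sbtw u x w) (hz : sbtw u z w) :
    x = z ∨ Quad u x z w ∨ Quad u z x w := by
  simp only [Quad, Fin.sbtw_iff] at *; omega

theorem eq_or_sbtw_or_sbtw (hab : a ≠ b) (hbc : b ≠ c) (hca : c ≠ a) : sbtw a b c ∨ sbtw c b a := by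
  simp only [Fin.sbtw_iff]; omega

theorem triple_rotate (a b c : Fin N) : ({a, b, c} : Finset (Fin N)) = {b, c, a} := by
  rw [Finset.insert_comm, Finset.pair_comm]

theorem triple_reverse (a b c : Fin N) : ({a, b, c} : Finset (Fin N)) = {c, b, a} := by
  rw [triple_rotate, Finset.insert_comm]

theorem rotation_of_triple_eq (huxw : sbtw u x w) (habc : sbtw a b c)
    (heq : ({u, x, w} : Finset (Fin N)) = {a, b, c}) :
    (u = a ∧ x = b ∧ w = c) ∨ (u = b ∧ x = c ∧ w = a) ∨ (u = c ∧ x = a ∧ w = b) := by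
  have hu : u ∈ ({a, b, c} : Finset (Fin N)) := heq ▸ by simp
  have hx : x ∈ ({a, b, c} : Finset (Fin N)) := heq ▸ by simp
  have hw : w ∈ ({a, b, c} : Finset (Fin N)) := heq ▸ by simp
  simp only [Finset.mem_insert, Finset.mem_singleton, Fin.sbtw_iff] at *
  rcases hu with rfl | rfl | rfl <;> omega

variable [NeZero N] {D D' : Finset (Edg N)} {e : Edg N}

theorem val_add_one_eq (a : Fin N) :
    (a + 1).val = a.val + 1 ∨ (a + 1).val = 0 ∧ a.val + 1 = N := by
  obtain _ | k := N
  · exact a.elim0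
  · rcases eq_or_ne a (Fin.last k) with rfl | ha
    · exact Or.inr ⟨by rw [Fin.last_add_one, Fin.val_zero], rfl⟩
    · exact Or.inl (Fin.val_add_one_of_lt (Fin.lt_last_iff_ne_last.2 ha))

theorem not_sbtw_add_one : ¬ sbtw a b (a + 1) := by
  have := val_add_one_eq a
  simp only [Fin.sbtw_iff]
  omega

/-- No two edges of `D` cross, boundary edges included. -/
def NonCrossing (D : Finset (Edg N)) : Prop :=
  ∀ ⦃a b c d : Fin N⦄, Quad a b c d → isEdgeOf D s(a, c) → ¬ isEdgeOf D s(b, d)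

theorem Quad.not_isBnd (hq : Quad a b c d) : ¬ isBnd s(a, c) := by
  rintro ⟨i, hi⟩
  rcases Sym2.eq_iff.1 hi with ⟨rfl, rfl⟩ | ⟨rfl, rfl⟩
  · exact not_sbtw_add_one hq.1
  · exact not_sbtw_add_one hq.sbtw₃₄₁

theorem IsTriangulation.nonCrossing (hD : IsTriangulation D) : NonCrossing D :=
  fun _ _ _ _ hq hac hbd => hD.2.2 _ (hac.resolve_left hq.not_isBnd) _
    (hbd.resolve_left hq.rotate.not_isBnd) hq.crossE

theorem isTri_iff (habc : sbtw a b c) :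
    IsTri D {a, b, c} ↔ isEdgeOf D s(a, b) ∧ isEdgeOf D s(b, c) ∧ isEdgeOf D s(c, a) := by
  obtain ⟨hab, hbc, hca⟩ := sbtw_pairwise_ne habc
  constructor
  · rintro ⟨-, h⟩
    exact ⟨h a (by simp) b (by simp) hab, h b (by simp) c (by simp) hbc,
      h c (by simp) a (by simp) hca⟩
  · rintro ⟨h₁, h₂, h₃⟩
    have hba := Sym2.eq_swap ▸ h₁
    have hcb := Sym2.eq_swap ▸ h₂
    have hac := Sym2.eq_swap ▸ h₃
    refine ⟨Finset.card_eq_three.2 ⟨a, b, c, hab, hca.symm, hbc, rfl⟩, ?_⟩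
    simp only [Finset.mem_insert, Finset.mem_singleton]
    rintro _ (rfl | rfl | rfl) _ (rfl | rfl | rfl) hne
    all_goals first | assumption | exact absurd rfl hne

theorem IsTri.apex_unique (hD : NonCrossing D) (hx : IsTri D {u, x, w}) (hz : IsTri D {u, z, w})
    (hux : sbtw u x w) (huz : sbtw u z w) : x = z := by
  obtain ⟨ux, xw, -⟩ := (isTri_iff hux).1 hx
  obtain ⟨uz, zw, -⟩ := (isTri_iff huz).1 hz
  rcases eq_or_quad hux huz with h | h | h
  · exact h
  · exact absurd xw (hD h uz)
  · exact absurd zw (hD h ux)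

theorem IsTri.exists_apex {T : Finset (Fin N)} (hT : IsTri D T) (hu : u ∈ T) (hw : w ∈ T)
    (huw : u ≠ w) : ∃ x, T = {u, x, w} ∧ (sbtw u x w ∨ sbtw w x u) := by
  have hw' : w ∈ T.erase u := Finset.mem_erase.2 ⟨huw.symm, hw⟩
  obtain ⟨x, hx⟩ : ∃ x, (T.erase u).erase w = {x} := Finset.card_eq_one.1 (by
    rw [Finset.card_erase_of_mem hw', Finset.card_erase_of_mem hu, hT.1])
  have hxuw : x ∈ (T.erase u).erase w := hx ▸ Finset.mem_singleton_self x
  simp only [Finset.mem_erase] at hxuw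
  refine ⟨x, ?_, eq_or_sbtw_or_sbtw hxuw.2.1.symm hxuw.1 huw.symm⟩
  rw [← Finset.insert_erase hu, ← Finset.insert_erase hw', hx, Finset.pair_comm]

/-- `D'` arises from `D` by replacing the diagonal `s(t, h)` by the other diagonal `s(y, s)` of the
quadrilateral `t, y, h, s`. -/
structure IsDiagFlip (D D' : Finset (Edg N)) (t y h s : Fin N) : Prop where
  quad : Quad t y h s
  diag_mem : s(t, h) ∈ D
  isTri_left : IsTri D {t, y, h}
  isTri_right : IsTri D {t, h, s}
  diag_eq : D' = insert s(y, s) (D.erase s(t, h))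

namespace IsDiagFlip

variable (hF : IsDiagFlip D D' t y h s) (hD : NonCrossing D)

include hF

theorem isEdgeOf_sides :
    isEdgeOf D s(t, y) ∧ isEdgeOf D s(y, h) ∧ isEdgeOf D s(h, s) ∧ isEdgeOf D s(s, t) :=
  have hl := (isTri_iff hF.quad.sbtw₁₂₃).1 hF.isTri_left
  have hr := (isTri_iff hF.quad.2).1 hF.isTri_right
  ⟨hl.1, hl.2.1, hr.2.1, hr.2.2⟩

theorem isEdgeOf_iff : isEdgeOf D' e ↔ e = s(y, s) ∨ e ≠ s(t, h) ∧ isEdgeOf D e := by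
  have hth : e = s(t, h) → ¬ isBnd e := fun he => he ▸ hF.quad.not_isBnd
  simp only [isEdgeOf, hF.diag_eq, Finset.mem_insert, Finset.mem_erase]
  tauto

theorem isEdgeOf_new : isEdgeOf D' s(y, s) := hF.isEdgeOf_iff.2 (Or.inl rfl)

theorem not_isEdgeOf_diag : ¬ isEdgeOf D' s(t, h) := fun he =>
  (hF.isEdgeOf_iff.1 he).elim (fun heq => by
    have hq := hF.quad
    simp only [Quad, Fin.sbtw_iff, Sym2.eq_iff] at hq heq
    omega) fun hne => hne.1 rfl

theorem isEdgeOf_of_isEdgeOf (he : isEdgeOf D e) (hne : e ≠ s(t, h)) : isEdgeOf D' e :=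
  hF.isEdgeOf_iff.2 (Or.inr ⟨hne, he⟩)

theorem isEdgeOf_of_isEdgeOf_flip (he : isEdgeOf D' e) (hne : e ≠ s(y, s)) : isEdgeOf D e :=
  ((hF.isEdgeOf_iff.1 he).resolve_left hne).2

theorem isEdgeOf_sides_flip :
    isEdgeOf D' s(t, y) ∧ isEdgeOf D' s(y, h) ∧ isEdgeOf D' s(h, s) ∧ isEdgeOf D' s(s, t) := by
  obtain ⟨hty, hyh, hhs, hst⟩ := hF.isEdgeOf_sides
  have hq := hF.quad
  simp only [Quad, Fin.sbtw_iff] at hq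
  refine ⟨hF.isEdgeOf_of_isEdgeOf hty ?_, hF.isEdgeOf_of_isEdgeOf hyh ?_,
    hF.isEdgeOf_of_isEdgeOf hhs ?_, hF.isEdgeOf_of_isEdgeOf hst ?_⟩ <;>
  · rw [Ne, Sym2.eq_iff]
    omega

theorem isTri_new_left : IsTri D' {t, y, s} :=
  have hs := hF.isEdgeOf_sides_flip
  (isTri_iff hF.quad.sbtw₄₁₂.cyclic_left).2 ⟨hs.1, hF.isEdgeOf_new, hs.2.2.2⟩

theorem isTri_new_right : IsTri D' {y, h, s} :=
  have hs := hF.isEdgeOf_sides_flip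
  (isTri_iff hF.quad.sbtw₂₃₄).2 ⟨hs.2.1, hs.2.2.1, Sym2.eq_swap ▸ hF.isEdgeOf_new⟩

include hD

/- An edge of `D` crossing the new diagonal would have to leave the quadrilateral through a
side. -/
theorem eq_or_eq_of_quad (hq : Quad y b s d) (hbd : isEdgeOf D s(b, d)) : b = h ∧ d = t := by
  obtain ⟨hty, hyh, hhs, hst⟩ := hF.isEdgeOf_sides
  have hdb : isEdgeOf D s(d, b) := Sym2.eq_swap ▸ hbd
  constructor
  · rcases eq_or_quad hq.1 hF.quad.sbtw₂₃₄ with h | h | h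
    · exact h
    · exact (hD (h.trans_left hq.2) hyh hbd).elim
    · exact (hD (h.trans_right hq.2) hhs hbd).elim
  · rcases eq_or_quad hq.sbtw₃₄₁ hF.quad.sbtw₄₁₂ with h | h | h
    · exact h
    · exact (hD (h.trans_left hq.rotate.rotate.2) hst hdb).elim
    · exact (hD (h.trans_right hq.rotate.rotate.2) hty hdb).elim

theorem nonCrossing : NonCrossing D' := by
  have hnew : ∀ ⦃b d⦄, Quad y b s d → ¬ isEdgeOf D' s(b, d) := by
    intro b d hq hbd
    rcases hF.isEdgeOf_iff.1 hbd with heq | ⟨hne, hbd⟩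
    · simp only [Quad, Fin.sbtw_iff, Sym2.eq_iff] at hq heq
      omega
    · obtain ⟨rfl, rfl⟩ := hF.eq_or_eq_of_quad hD hq hbd
      exact hne Sym2.eq_swap
  have hnew' : ∀ ⦃a b c d⦄, s(a, c) = s(y, s) → Quad a b c d → ¬ isEdgeOf D' s(b, d) := by
    intro a b c d heq hq hbd
    rcases Sym2.eq_iff.1 heq with ⟨rfl, rfl⟩ | ⟨rfl, rfl⟩
    · exact hnew hq hbd
    · exact hnew hq.rotate.rotate (Sym2.eq_swap ▸ hbd)
  intro a b c d hq hac hbd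
  by_cases hac' : s(a, c) = s(y, s)
  · exact hnew' hac' hq hbd
  by_cases hbd' : s(b, d) = s(y, s)
  · exact hnew' hbd' hq.rotate (Sym2.eq_swap ▸ hac)
  · exact hD hq (hF.isEdgeOf_of_isEdgeOf_flip hac hac') (hF.isEdgeOf_of_isEdgeOf_flip hbd hbd')

theorem isTri_or {T : Finset (Fin N)} (hT : IsTri D' T) :
    T = {t, y, s} ∨ T = {y, h, s} ∨ IsTri D T := by
  have hys : y ≠ s := (sbtw_pairwise_ne hF.quad.sbtw₂₃₄).2.2.symm
  by_cases hmem : y ∈ T ∧ s ∈ T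
  · obtain ⟨z, rfl, hz | hz⟩ := hT.exists_apex hmem.1 hmem.2 hys
    · have hzh := hT.apex_unique (hF.nonCrossing hD) hF.isTri_new_right hz hF.quad.sbtw₂₃₄
      exact Or.inr (Or.inl (by rw [hzh]))
    · rw [triple_reverse] at hT
      have hzt := hT.apex_unique (hF.nonCrossing hD)
        ((triple_rotate s t y).symm ▸ hF.isTri_new_left) hz hF.quad.sbtw₄₁₂
      exact Or.inl (by rw [hzt, Finset.insert_comm])
  · refine Or.inr (Or.inr ⟨hT.1, fun u hu v hv huv =>
      hF.isEdgeOf_of_isEdgeOf_flip (hT.2 u hu v hv huv) fun heq => hmem ?_⟩)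
    rcases Sym2.eq_iff.1 heq with ⟨rfl, rfl⟩ | ⟨rfl, rfl⟩
    · exact ⟨hu, hv⟩
    · exact ⟨hv, hu⟩

end IsDiagFlip

end Polygon

section Signs

variable {N : ℕ} {a b c : Fin N}

/-- The sign relating the pairing of the vectors at the vertices `a` and `b` to the positive
`λ`-length of the edge `s(a, b)`. -/
def side (a b : Fin N) : ℤˣ := if b < a then -1 else 1

theorem side_mul_side (h : sbtw a b c) : side a b * side b c = side a c := by
  obtain ⟨ha, hb⟩ | ⟨ha, hb⟩ | ⟨ha, hb⟩ := Fin.sbtw_iff.1 h <;>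
    simp [side, ha, hb, ha.le.not_gt, hb.le.not_gt, ha.trans hb, (ha.trans hb).le.not_gt]

theorem side_swap (h : a ≠ b) : side b a = -side a b := by
  rcases h.lt_or_gt with h | h <;> simp [side, h, h.le.not_gt]

theorem side_self (a : Fin N) : side a a = 1 := if_neg (lt_irrefl a)

/-- The sign of an edge orientation, `true` being the orientation towards the larger vertex. -/
def oriSign (o : Bool) : ℤˣ := if o then 1 else -1

theorem oriSign_not (o : Bool) : oriSign (!o) = -oriSign o := by
  cases o <;> simp [oriSign]

theorem oriSign_decide_lt (h : a ≠ b) : oriSign (decide (a < b)) = side a b := by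
  rcases h.lt_or_gt with h | h <;> simp [side, oriSign, h, h.le.not_gt]

/-- The sign of the triangle `u, x, w` as seen from its edge directed from `u` to `w`. -/
def halfSign (ε : Finset (Fin N) → ℤˣ) (u x w : Fin N) : ℤˣ := ε {u, x, w} * side u x

variable [NeZero N] {D D' : Finset (Edg N)} {ori ori' : Edg N → Bool} {ε : Finset (Fin N) → ℤˣ}
  {t y h s u x w : Fin N}

/-- The triangle signs `ε` trivialize the spin structure given by the orientation `ori`: across
each diagonal the half-signs of the two triangles multiply to its orientation. -/
def SignRel (D : Finset (Edg N)) (ori : Edg N → Bool) (ε : Finset (Fin N) → ℤˣ) : Prop :=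
  ∀ ⦃t y h s⦄, Quad t y h s → s(t, h) ∈ D → IsTri D {t, y, h} → IsTri D {h, s, t} →
    halfSign ε t y h * halfSign ε h s t = oriSign (ori s(t, h))

/-- A flip of the diagonal `s(t, h)`, directed from `t` to `h`, together with its effect on edge
orientations: the side `s(y, h)` is reversed and the new diagonal is directed from `s` to `y`. -/
structure IsOrientedFlip (D D' : Finset (Edg N)) (ori ori' : Edg N → Bool) (t y h s : Fin N) : Prop
    extends IsDiagFlip D D' t y h s where
  ori_diag : ori s(t, h) = decide (t < h)
  ori_side : ori' s(y, h) = !ori s(y, h)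
  ori_new : ori' s(y, s) = decide (s < y)
  ori_eq : ∀ e, e ≠ s(y, s) → e ≠ s(y, h) → ori' e = ori e

/-- The triangle signs after the flip of the diagonal `s(t, h)` of the quadrilateral
`t, y, h, s`. -/
def flipSign (ε : Finset (Fin N) → ℤˣ) (t y h s : Fin N) (T : Finset (Fin N)) : ℤˣ :=
  if T = {t, y, s} then ε {t, y, h} * side h s
  else if T = {y, h, s} then ε {t, h, s} * side t y else ε T

omit [NeZero N] in
theorem flipSign_left : flipSign ε t y h s {t, y, s} = ε {t, y, h} * side h s := if_pos rfl

omit [NeZero N] in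
theorem flipSign_right (hq : Quad t y h s) :
    flipSign ε t y h s {y, h, s} = ε {t, h, s} * side t y := by
  have hne : ({y, h, s} : Finset (Fin N)) ≠ {t, y, s} := fun heq => by
    have hq := hq
    have := heq ▸ Finset.mem_insert_of_mem (a := h) (b := y) (Finset.mem_insert_self h {s})
    simp only [Finset.mem_insert, Finset.mem_singleton, Quad, Fin.sbtw_iff] at *
    omega
  rw [flipSign, if_neg hne, if_pos rfl]

omit [NeZero N] in
theorem sign_left (ε : Finset (Fin N) → ℤˣ) (t y h : Fin N) :
    ε {t, y, h} * (side t y * side t h) * (side t t * side t y * side t h) = ε {t, y, h} := by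
  rw [side_self, one_mul, mul_assoc, Int.units_mul_self, mul_one]

omit [NeZero N] in
theorem sign_flip_left (hq : Quad t y h s) (ε : Finset (Fin N) → ℤˣ) :
    ε {t, y, h} * (side t y * side t h) * (side t t * side t y * side t s) =
      flipSign ε t y h s {t, y, s} := by
  rw [flipSign_left, ← side_mul_side hq.2, side_self]
  generalize ε {t, y, h} = α, side t y = δ, side h s = κ, side t h = ρ
  revert α δ κ ρ
  decide

namespace IsOrientedFlip

variable (hF : IsOrientedFlip D D' ori ori' t y h s) (hε : SignRel D ori ε)

include hF hε

theorem sign_mul_sign : ε {t, y, h} * ε {t, h, s} = side t y * side h s * side t h := by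
  have hrel := hε hF.quad hF.diag_mem hF.isTri_left (triple_rotate t h s ▸ hF.isTri_right)
  rw [halfSign, halfSign, ← triple_rotate t h s, hF.ori_diag,
    oriSign_decide_lt (sbtw_pairwise_ne hF.quad.2).1] at hrel
  generalize ε {t, y, h} = α, ε {t, h, s} = β, side t y = δ, side h s = κ, side t h = ρ at hrel ⊢
  revert α β δ κ ρ
  decide

/- With the lifts `side t x • v x` of the ideal points, both triangles of the quadrilateral have the
sign `ε {t, y, h} * (side t y * side t h)`, before and after the flip. -/
theorem sign_right : ε {t, y, h} * (side t y * side t h) * (side t t * side t h * side t s) =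
    ε {t, h, s} := by
  have hK := hF.sign_mul_sign hε
  rw [← side_mul_side hF.quad.2, side_self]
  generalize ε {t, y, h} = α, ε {t, h, s} = β, side t y = δ, side h s = κ, side t h = ρ at hK ⊢
  revert α β δ κ ρ
  decide

theorem sign_flip_right : ε {t, y, h} * (side t y * side t h) *
    (side t y * side t h * side t s) = flipSign ε t y h s {y, h, s} := by
  rw [flipSign_right hF.quad, ← hF.sign_right hε, side_self]
  generalize ε {t, y, h} = α, side t y = δ, side t s = κ, side t h = ρ
  revert α δ κ ρ
  decide

theorem halfSign_new :
    halfSign (flipSign ε t y h s) y h s * halfSign (flipSign ε t y h s) s t y = side s y := by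
  have hK := hF.sign_mul_sign hε
  have hsth := side_mul_side hF.quad.sbtw₃₄₁.cyclic_left
  have hsyh := side_mul_side hF.quad.sbtw₂₃₄.cyclic_left.cyclic_left
  rw [halfSign, halfSign, flipSign_right hF.quad, triple_rotate s t y, flipSign_left]
  calc ε {t, h, s} * side t y * side y h * (ε {t, y, h} * side h s * side s t)
      = (ε {t, y, h} * ε {t, h, s}) * (side t y * side h s) * (side y h * side s t) := by ac_rfl
    _ = side t y * side t y * (side h s * side h s) * (side s t * side t h) * side y h := by
        rw [hK]; ac_rfl
    _ = side s y := by
        rw [hsth, ← hsyh, mul_assoc, mul_assoc (side s y)]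
        simp only [Int.units_mul_self, one_mul, mul_one]

theorem halfSign_flip_tail : halfSign (flipSign ε t y h s) t y s = halfSign ε t h s := by
  have hK := hF.sign_mul_sign hε
  rw [halfSign, halfSign, flipSign_left]
  generalize ε {t, y, h} = α, ε {t, h, s} = β, side t y = δ, side h s = κ, side t h = ρ at hK ⊢
  revert α β δ κ ρ
  decide

theorem halfSign_flip_head : halfSign (flipSign ε t y h s) h s y = -halfSign ε h t y := by
  have hK := hF.sign_mul_sign hε
  rw [halfSign, halfSign, ← triple_rotate y h s, flipSign_right hF.quad, triple_rotate h t y,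
    side_swap (sbtw_pairwise_ne hF.quad.2).1]
  generalize ε {t, y, h} = α, ε {t, h, s} = β, side t y = δ, side h s = κ, side t h = ρ at hK ⊢
  revert α β δ κ ρ
  decide

omit hε in
theorem halfSign_flip_left : halfSign (flipSign ε t y h s) y s t = halfSign ε y h t := by
  have hyhs := side_mul_side hF.quad.sbtw₂₃₄
  rw [halfSign, halfSign, ← triple_rotate t y s, flipSign_left, ← triple_rotate t y h, ← hyhs,
    mul_comm (side y h), mul_assoc, ← mul_assoc (side h s), Int.units_mul_self, one_mul]

omit hε in
theorem halfSign_flip_right : halfSign (flipSign ε t y h s) s y h = halfSign ε s t h := by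
  have hsty := side_mul_side hF.quad.sbtw₄₁₂
  rw [halfSign, halfSign, triple_rotate s y h, flipSign_right hF.quad, triple_rotate s t h, ← hsty,
    mul_comm (side s t), mul_assoc, ← mul_assoc (side t y), Int.units_mul_self, one_mul]

/- The exceptional edge is the side `s(y, h)` reversed by the flip, seen from inside the
quadrilateral. -/
theorem halfSign_flip (hD : NonCrossing D) (hux : sbtw u x w) (hT : IsTri D' {u, x, w})
    (hne : s(u, w) ≠ s(y, s)) : ∃ z, sbtw u z w ∧ IsTri D {u, z, w} ∧
      halfSign (flipSign ε t y h s) u x w =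
        (if u = h ∧ w = y then -1 else 1) * halfSign ε u z w := by
  have hq := hF.quad
  obtain ⟨-, hyh, hht⟩ := sbtw_pairwise_ne hq.1
  obtain ⟨-, hst, -⟩ := sbtw_pairwise_ne hq.sbtw₃₄₁
  obtain ⟨hhs, hsy, -⟩ := sbtw_pairwise_ne hq.sbtw₂₃₄
  by_cases hleft : ({u, x, w} : Finset (Fin N)) = {t, y, s}
  · rcases rotation_of_triple_eq hux hq.sbtw₄₁₂.cyclic_left hleft with
      ⟨rfl, rfl, rfl⟩ | ⟨rfl, rfl, rfl⟩ | ⟨rfl, rfl, rfl⟩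
    · exact ⟨h, hq.2, hF.isTri_right, by simp [hF.halfSign_flip_tail hε, hht.symm]⟩
    · exact ⟨h, hq.1.cyclic_left, triple_rotate w u h ▸ hF.isTri_left, by
        simp [hF.halfSign_flip_left, hyh]⟩
    · exact absurd Sym2.eq_swap hne
  by_cases hright : ({u, x, w} : Finset (Fin N)) = {y, h, s}
  · rcases rotation_of_triple_eq hux hq.sbtw₂₃₄ hright with
      ⟨rfl, rfl, rfl⟩ | ⟨rfl, rfl, rfl⟩ | ⟨rfl, rfl, rfl⟩
    · exact absurd rfl hne
    · exact ⟨t, hq.1.cyclic_left.cyclic_left, (triple_rotate u t w).symm ▸ hF.isTri_left, by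
        simp [hF.halfSign_flip_head hε]⟩
    · exact ⟨t, hq.sbtw₃₄₁.cyclic_left, (triple_rotate u t w).symm ▸ hF.isTri_right, by
        simp [hF.halfSign_flip_right, hhs.symm]⟩
  have hold : IsTri D {u, x, w} := ((hF.isTri_or hD hT).resolve_left hleft).resolve_left hright
  refine ⟨x, hux, hold, ?_⟩
  have hcond : ¬ (u = h ∧ w = y) := by
    rintro ⟨rfl, rfl⟩
    obtain rfl := hold.apex_unique hD ((triple_rotate u t w).symm ▸ hF.isTri_left) hux
      hq.1.cyclic_left.cyclic_left
    exact hF.not_isEdgeOf_diag (Sym2.eq_swap ▸ ((isTri_iff hux).1 hT).1)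
  rw [if_neg hcond, one_mul, halfSign, halfSign, flipSign, if_neg hleft, if_neg hright]

theorem signRel (hD : NonCrossing D) : SignRel D' ori' (flipSign ε t y h s) := by
  have hq := hF.quad
  have hD' := hF.nonCrossing hD
  obtain ⟨hyh, -, hsy⟩ := sbtw_pairwise_ne hq.sbtw₂₃₄
  intro a b c d hquad hac hb hd
  by_cases hne : s(a, c) = s(y, s)
  · rw [hne, hF.ori_new, oriSign_decide_lt hsy, ← hF.halfSign_new hε]
    rcases Sym2.eq_iff.1 hne with ⟨rfl, rfl⟩ | ⟨rfl, rfl⟩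
    · rw [hb.apex_unique hD' hF.isTri_new_right hquad.1 hq.sbtw₂₃₄,
        hd.apex_unique hD' ((triple_rotate _ t _).symm ▸ hF.isTri_new_left) hquad.sbtw₃₄₁
          hq.sbtw₄₁₂]
    · rw [hb.apex_unique hD' ((triple_rotate _ t _).symm ▸ hF.isTri_new_left) hquad.1 hq.sbtw₄₁₂,
        hd.apex_unique hD' hF.isTri_new_right hquad.sbtw₃₄₁ hq.sbtw₂₃₄, mul_comm]
  have hca : s(c, a) ≠ s(y, s) := Sym2.eq_swap ▸ hne
  have hacD : s(a, c) ∈ D := Finset.mem_of_mem_erase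
    (Finset.mem_of_mem_insert_of_ne (hF.diag_eq ▸ hac) hne)
  obtain ⟨z, hz, hTz, hsz⟩ := hF.halfSign_flip hε hD hquad.1 hb hne
  obtain ⟨z', hz', hTz', hsz'⟩ := hF.halfSign_flip hε hD hquad.sbtw₃₄₁ hd hca
  rw [hsz, hsz', mul_mul_mul_comm, hε ⟨hz, hz'.cyclic_left.cyclic_left⟩ hacD hTz hTz']
  by_cases hside : s(a, c) = s(y, h)
  · rw [hside, hF.ori_side, oriSign_not]
    rcases Sym2.eq_iff.1 hside with ⟨rfl, rfl⟩ | ⟨rfl, rfl⟩ <;> simp [hyh, hyh.symm]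
  · rw [hF.ori_eq _ hne hside, if_neg, if_neg, one_mul, one_mul]
    · rintro ⟨rfl, rfl⟩
      exact hside rfl
    · rintro ⟨rfl, rfl⟩
      exact hside Sym2.eq_swap

end IsOrientedFlip

end Signs

section Realization

variable {A : Type*} [Ring A] {N : ℕ} [NeZero N] {Pos : Set A} {sqrt : A → A}
  {st st' : PState A N} {t y h s : Fin N}

/-- The super Ptolemy flip of the quadrilateral `t, y, h, s` whose diagonal `s(t, h)` is directed
from `t` to `h`: in the notation of `Flip`, `t, y, h, s` is `p, j, r, l` or `r, l, p, j`. -/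
structure IsPtolemyFlip (Pos : Set A) (sqrt : A → A) (st st' : PState A N) (t y h s : Fin N) : Prop
    extends IsOrientedFlip st.diag st'.diag st.ori st'.ori t y h s where
  lam_mul : st.lam s(t, h) * st'.lam s(y, s) =
    st.lam s(t, y) * st.lam s(h, s) + st.lam s(y, h) * st.lam s(t, s) +
      sqrt (st.lam s(t, y) * st.lam s(y, h) * st.lam s(h, s) * st.lam s(t, s)) *
        (st.mu {t, h, s} * st.mu {t, y, h})
  lam_mem : st'.lam s(y, s) ∈ Pos
  mu_left : st'.mu {t, y, s} *
      sqrt (st.lam s(t, y) * st.lam s(h, s) + st.lam s(y, h) * st.lam s(t, s)) =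
    st.mu {t, y, h} * sqrt (st.lam s(y, h) * st.lam s(t, s)) +
      st.mu {t, h, s} * sqrt (st.lam s(t, y) * st.lam s(h, s))
  mu_right : st'.mu {y, h, s} *
      sqrt (st.lam s(t, y) * st.lam s(h, s) + st.lam s(y, h) * st.lam s(t, s)) =
    st.mu {t, h, s} * sqrt (st.lam s(y, h) * st.lam s(t, s)) -
      st.mu {t, y, h} * sqrt (st.lam s(t, y) * st.lam s(h, s))
  lam_eq : ∀ e, e ≠ s(y, s) → st'.lam e = st.lam e
  mu_eq : ∀ T, T ≠ {t, y, s} → T ≠ {y, h, s} → st'.mu T = st.mu T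

theorem Flip.exists_isPtolemyFlip (hF : Flip Pos sqrt st st') :
    ∃ t y h s, IsPtolemyFlip Pos sqrt st st' t y h s := by
  obtain ⟨p, j, r, l, hpj, hjr, hl, hmem, hT₁, hT₂, hdiag, hF⟩ := hF
  have hq : Quad p j r l := by
    simp only [Quad, Fin.sbtw_iff]
    omega
  cases hori : st.ori s(p, r) with
  | true =>
    simp only [hori, if_true] at hF
    obtain ⟨hlam, hpos, hmu₁, hmu₂, hlam', hmu', hori', hside, hnew⟩ := hF
    rw [Sym2.eq_swap (a := l)] at hlam hmu₁ hmu₂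
    exact ⟨p, j, r, l, ⟨⟨⟨hq, hmem, hT₁, hT₂, hdiag⟩, by simp [hori, hpj.trans hjr], hside, hnew,
      hori'⟩, hlam, hpos, hmu₁, hmu₂, hlam', hmu'⟩⟩
  | false =>
    simp only [hori, Bool.false_eq_true, if_false] at hF
    obtain ⟨hlam, hpos, hmu₁, hmu₂, hlam', hmu', hori', hside, hnew⟩ := hF
    simp only [Sym2.eq_swap (a := j), Sym2.eq_swap (a := p) (b := r), ← triple_rotate r p j,
      triple_rotate p r l, triple_rotate j r l, ← triple_rotate l p j] at *
    refine ⟨r, l, p, j, ⟨⟨⟨hq.rotate.rotate, hmem, hT₂, hT₁, hdiag⟩, ?_, hside, hnew, ?_⟩,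
      hlam, hpos, hmu₁, hmu₂, hlam', hmu'⟩⟩
    · simp [hori, (hpj.trans hjr).le]
    · exact hori'

open SuperVec SuperSubring

variable {S : SuperSubring A} {v : Fin N → SuperVec S.even S.odd} {ε : Finset (Fin N) → ℤˣ}
  {a b c : Fin N}

/-- The `μ`-invariant of the triangle `a, b, c` is the odd invariant of its vectors, normalized by
the square roots of the `λ`-lengths of its sides and with sign `ε`. -/
def RealizesTri (sqrt : A → A) (v : Fin N → SuperVec S.even S.odd) (ε : Finset (Fin N) → ℤˣ)
    (st : PState A N) (a b c : Fin N) : Prop :=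
  sqrt (st.lam s(a, b)) * sqrt (st.lam s(b, c)) * sqrt (st.lam s(a, c)) * st.mu {a, b, c} =
    ((ε {a, b, c} • oddInvariant (v a) (v b) (v c) : S.odd) : A)

/-- The state `st` consists of the `λ`-lengths and `μ`-invariants of the vectors `v` at the vertices
of the polygon, with triangle signs `ε` matching the edge orientations. -/
structure Realizes (Pos : Set A) (sqrt : A → A) (v : Fin N → SuperVec S.even S.odd)
    (ε : Finset (Fin N) → ℤˣ) (st : PState A N) : Prop where
  nonCrossing : NonCrossing st.diag
  signRel : SignRel st.diag st.ori ε
  lam_mem : ∀ e, isEdgeOf st.diag e → st.lam e ∈ Pos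
  lam_eq : ∀ ⦃a b⦄, a ≠ b → isEdgeOf st.diag s(a, b) →
    st.lam s(a, b) = ((side a b • pairing (v a) (v b) : S.even) : A)
  mu_mem : ∀ T, IsTri st.diag T → st.mu T ∈ S.odd
  mu_eq : ∀ ⦃a b c⦄, sbtw a b c → IsTri st.diag {a, b, c} → RealizesTri sqrt v ε st a b c

omit [NeZero N] in
theorem RealizesTri.rotate (hPos : IsSqrtCone Pos sqrt) (hab : st.lam s(a, b) ∈ Pos)
    (h : RealizesTri sqrt v ε st a b c) : RealizesTri sqrt v ε st b c a := by
  have hcomm := hPos.mul_comm _ (hPos.sqrt_mem _ hab)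
  rw [RealizesTri, ← triple_rotate a b c, oddInvariant_rotate, ← h, Sym2.eq_swap (a := c),
    Sym2.eq_swap (a := b) (b := a), mul_assoc (sqrt (st.lam s(a, b))), hcomm]

omit [NeZero N] in
theorem RealizesTri.of_triple_eq {x y z : Fin N} (hPos : IsSqrtCone Pos sqrt) (habc : sbtw a b c)
    (hxyz : sbtw x y z) (heq : ({a, b, c} : Finset (Fin N)) = {x, y, z})
    (hxy : st.lam s(x, y) ∈ Pos) (hyz : st.lam s(y, z) ∈ Pos)
    (h : RealizesTri sqrt v ε st x y z) : RealizesTri sqrt v ε st a b c := by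
  rcases rotation_of_triple_eq habc hxyz heq with
    ⟨rfl, rfl, rfl⟩ | ⟨rfl, rfl, rfl⟩ | ⟨rfl, rfl, rfl⟩
  · exact h
  · exact h.rotate hPos hxy
  · exact (h.rotate hPos hxy).rotate hPos hyz

/- The vectors `side t x • v x` are lifts of the ideal points all of whose pairings in cyclic order
from `t` are positive. -/
omit [NeZero N] in
theorem lam_eq_side_smul_pairing_iff {x : S.even} (hab : side t a * side a b = side t b)
    (hx : (x * x : A) = st.lam s(a, b)) :
    st.lam s(a, b) = ((side a b • pairing (v a) (v b) : S.even) : A) ↔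
      pairing (side t a • v a) (side t b • v b) = x * x := by
  rw [pairing_units_smul, ← hab, ← mul_assoc, Int.units_mul_self, one_mul, ← hx, ← Subring.coe_mul,
    Subtype.coe_inj, eq_comm]

omit [NeZero N] in
theorem realizesTri_iff {x y z : S.even} {θ : S.odd} {κ : ℤˣ}
    (hx : (x : A) = sqrt (st.lam s(a, b))) (hy : (y : A) = sqrt (st.lam s(b, c)))
    (hz : (z : A) = sqrt (st.lam s(a, c))) (hθ : (θ : A) = st.mu {a, b, c})
    (hκ : κ * (side t a * side t b * side t c) = ε {a, b, c}) :
    RealizesTri sqrt v ε st a b c ↔ (x * y * z) • θ =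
      ((κ : ℤ) : S.even) • oddInvariant (side t a • v a) (side t b • v b) (side t c • v c) := by
  rw [oddInvariant_units_smul, Int.cast_smul_eq_zsmul, ← Units.smul_def, smul_smul, hκ, RealizesTri,
    ← hx, ← hy, ← hz, ← hθ, ← Subring.coe_mul, ← Subring.coe_mul, ← coe_smul, Subtype.coe_inj]

theorem IsSqrtCone.isUnit_of_coe_mem (hPos : IsSqrtCone Pos sqrt) (hS : Pos ⊆ S.even) {x : S.even}
    (hx : (x : A) ∈ Pos) : IsUnit x :=
  .of_mul_eq_one ⟨Ring.inverse x, hS (hPos.inverse_mem x hx)⟩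
    (Subtype.ext (hPos.mul_inverse_cancel hx))

theorem IsSqrtCone.mem_odd_of_mul_mem (hPos : IsSqrtCone Pos sqrt) (hS : Pos ⊆ S.even) {x y : A}
    (hx : x ∈ Pos) (hxy : x * y ∈ S.odd) : y ∈ S.odd := by
  rw [← Ring.inverse_mul_cancel_left x y (hPos.isUnit x hx)]
  exact S.even_mul_odd _ (hS (hPos.inverse_mem x hx)) _ hxy

namespace IsPtolemyFlip

variable (hF : IsPtolemyFlip Pos sqrt st st' t y h s) (hPos : IsSqrtCone Pos sqrt)

section SquareRoots

variable (hlam : ∀ e, isEdgeOf st.diag e → st.lam e ∈ Pos)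

include hF hPos hlam

omit hPos in
theorem lam_sides_mem : st.lam s(t, y) ∈ Pos ∧ st.lam s(y, h) ∈ Pos ∧ st.lam s(h, s) ∈ Pos ∧
    st.lam s(t, s) ∈ Pos := by
  obtain ⟨hty, hyh, hhs, hst⟩ := hF.isEdgeOf_sides
  exact ⟨hlam _ hty, hlam _ hyh, hlam _ hhs, hlam _ (Sym2.eq_swap ▸ hst)⟩

omit hPos in
theorem lam_flip_mem {e : Edg N} (he : isEdgeOf st'.diag e) : st'.lam e ∈ Pos := by
  rcases eq_or_ne e s(y, s) with rfl | hne
  · exact hF.lam_mem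
  · exact hF.lam_eq e hne ▸ hlam e (hF.isEdgeOf_of_isEdgeOf_flip he hne)

theorem add_mem :
    st.lam s(t, y) * st.lam s(h, s) + st.lam s(y, h) * st.lam s(t, s) ∈ Pos := by
  obtain ⟨hty, hyh, hhs, hts⟩ := hF.lam_sides_mem hlam
  exact hPos.add_mem _ (hPos.mul_mem _ hty _ hhs) _ (hPos.mul_mem _ hyh _ hts)

theorem sqrt_add_mul_self :
    sqrt (st.lam s(t, y) * st.lam s(h, s) + st.lam s(y, h) * st.lam s(t, s)) *
        sqrt (st.lam s(t, y) * st.lam s(h, s) + st.lam s(y, h) * st.lam s(t, s)) =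
      sqrt (st.lam s(t, y)) * sqrt (st.lam s(t, y)) *
          (sqrt (st.lam s(h, s)) * sqrt (st.lam s(h, s))) +
        sqrt (st.lam s(y, h)) * sqrt (st.lam s(y, h)) *
          (sqrt (st.lam s(t, s)) * sqrt (st.lam s(t, s))) := by
  obtain ⟨hty, hyh, hhs, hts⟩ := hF.lam_sides_mem hlam
  rw [hPos.sqrt_mul_self _ (hF.add_mem hPos hlam), hPos.sqrt_mul_self _ hty,
    hPos.sqrt_mul_self _ hyh, hPos.sqrt_mul_self _ hhs, hPos.sqrt_mul_self _ hts]

theorem sqrt_lam_mul_self :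
    sqrt (st.lam s(t, h)) * sqrt (st.lam s(t, h)) *
        (sqrt (st'.lam s(y, s)) * sqrt (st'.lam s(y, s))) =
      sqrt (st.lam s(t, y)) * sqrt (st.lam s(t, y)) *
          (sqrt (st.lam s(h, s)) * sqrt (st.lam s(h, s))) +
        sqrt (st.lam s(y, h)) * sqrt (st.lam s(y, h)) *
          (sqrt (st.lam s(t, s)) * sqrt (st.lam s(t, s))) +
        sqrt (st.lam s(t, y)) * sqrt (st.lam s(y, h)) * sqrt (st.lam s(h, s)) *
          sqrt (st.lam s(t, s)) * (st.mu {t, h, s} * st.mu {t, y, h}) := by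
  obtain ⟨hty, hyh, hhs, hts⟩ := hF.lam_sides_mem hlam
  have htyh := hPos.mul_mem _ hty _ hyh
  rw [← hF.sqrt_add_mul_self hPos hlam, hPos.sqrt_mul_self _ (hF.add_mem hPos hlam),
    hPos.sqrt_mul_self _ (hlam _ (Or.inr hF.diag_mem)), hPos.sqrt_mul_self _ hF.lam_mem, hF.lam_mul,
    hPos.sqrt_mul _ (hPos.mul_mem _ htyh _ hhs) _ hts, hPos.sqrt_mul _ htyh _ hhs,
    hPos.sqrt_mul _ hty _ hyh]

theorem sqrt_add_mul_mu_left :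
    sqrt (st.lam s(t, y) * st.lam s(h, s) + st.lam s(y, h) * st.lam s(t, s)) * st'.mu {t, y, s} =
      sqrt (st.lam s(y, h)) * sqrt (st.lam s(t, s)) * st.mu {t, y, h} +
        sqrt (st.lam s(t, y)) * sqrt (st.lam s(h, s)) * st.mu {t, h, s} := by
  obtain ⟨hty, hyh, hhs, hts⟩ := hF.lam_sides_mem hlam
  rw [hPos.mul_comm _ (hPos.sqrt_mem _ (hF.add_mem hPos hlam)), hF.mu_left,
    ← hPos.mul_comm _ (hPos.sqrt_mem _ (hPos.mul_mem _ hyh _ hts)),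
    ← hPos.mul_comm _ (hPos.sqrt_mem _ (hPos.mul_mem _ hty _ hhs)),
    hPos.sqrt_mul _ hyh _ hts, hPos.sqrt_mul _ hty _ hhs]

theorem sqrt_add_mul_mu_right :
    sqrt (st.lam s(t, y) * st.lam s(h, s) + st.lam s(y, h) * st.lam s(t, s)) * st'.mu {y, h, s} =
      sqrt (st.lam s(y, h)) * sqrt (st.lam s(t, s)) * st.mu {t, h, s} -
        sqrt (st.lam s(t, y)) * sqrt (st.lam s(h, s)) * st.mu {t, y, h} := by
  obtain ⟨hty, hyh, hhs, hts⟩ := hF.lam_sides_mem hlam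
  rw [hPos.mul_comm _ (hPos.sqrt_mem _ (hF.add_mem hPos hlam)), hF.mu_right,
    ← hPos.mul_comm _ (hPos.sqrt_mem _ (hPos.mul_mem _ hyh _ hts)),
    ← hPos.mul_comm _ (hPos.sqrt_mem _ (hPos.mul_mem _ hty _ hhs)),
    hPos.sqrt_mul _ hyh _ hts, hPos.sqrt_mul _ hty _ hhs]

theorem sqrt_mul_sqrt_add_mem :
    sqrt (st'.lam s(y, s)) * sqrt (st.lam s(t, h)) +
      sqrt (st.lam s(t, y) * st.lam s(h, s) + st.lam s(y, h) * st.lam s(t, s)) ∈ Pos :=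
  hPos.add_mem _ (hPos.mul_mem _ (hPos.sqrt_mem _ hF.lam_mem) _
    (hPos.sqrt_mem _ (hlam _ (Or.inr hF.diag_mem)))) _ (hPos.sqrt_mem _ (hF.add_mem hPos hlam))

end SquareRoots

section Realizes

variable (hR : Realizes Pos sqrt v ε st) (hS : Pos ⊆ S.even)

include hF hPos hR hS

theorem isPtolemyQuad {a b c d e φ τ : S.even} {θ σ θ' σ' : S.odd}
    (ha : (a : A) = sqrt (st.lam s(t, y))) (hb : (b : A) = sqrt (st.lam s(y, h)))
    (hc : (c : A) = sqrt (st.lam s(h, s))) (hd : (d : A) = sqrt (st.lam s(t, s)))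
    (he : (e : A) = sqrt (st.lam s(t, h))) (hφ : (φ : A) = sqrt (st'.lam s(y, s)))
    (hτ : (τ : A) =
      sqrt (st.lam s(t, y) * st.lam s(h, s) + st.lam s(y, h) * st.lam s(t, s)))
    (hθ : (θ : A) = st.mu {t, y, h}) (hσ : (σ : A) = st.mu {t, h, s})
    (hθ' : (θ' : A) = st'.mu {t, y, s}) (hσ' : (σ' : A) = st'.mu {y, h, s}) :
    IsPtolemyQuad (side t t • v t) (side t y • v y) (side t h • v h) (side t s • v s)
      a b c d e φ τ ((ε {t, y, h} * (side t y * side t h) : ℤˣ) : ℤ) θ σ θ' σ' := by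
  have hq := hF.quad
  obtain ⟨hty, hyh, hht⟩ := sbtw_pairwise_ne hq.1
  obtain ⟨-, hhs, hst⟩ := sbtw_pairwise_ne hq.2
  obtain ⟨ety, eyh, ehs, est⟩ := hF.isEdgeOf_sides
  have eth : isEdgeOf st.diag s(t, h) := Or.inr hF.diag_mem
  have hside (x : Fin N) : side t t * side t x = side t x := by rw [side_self, one_mul]
  have hpair {u w : Fin N} {x : S.even} (huw : u ≠ w) (he : isEdgeOf st.diag s(u, w))
      (hx : (x : A) = sqrt (st.lam s(u, w))) (hside : side t u * side u w = side t w) :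
      pairing (side t u • v u) (side t w • v w) = x * x :=
    (lam_eq_side_smul_pairing_iff hside
      (by rw [hx, hPos.sqrt_mul_self _ (hR.lam_mem _ he)])).1 (hR.lam_eq huw he)
  exact
  { sign_mul_self := by
      rw [← Int.cast_mul, ← Units.val_mul, Int.units_mul_self, Units.val_one, Int.cast_one]
    pairing_TY := hpair hty ety ha (hside y)
    pairing_YH := hpair hyh eyh hb (side_mul_side hq.1)
    pairing_HS := hpair hhs ehs hc (side_mul_side hq.2)
    pairing_TS := hpair hst.symm (Sym2.eq_swap ▸ est) hd (hside s)
    pairing_TH := hpair hht.symm eth he (hside h)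
    odd_TYH := (realizesTri_iff ha hb he hθ (sign_left ε t y h)).1 (hR.mu_eq hq.1 hF.isTri_left)
    odd_THS := (realizesTri_iff he hc hd hσ (hF.sign_right hR.signRel)).1
      (hR.mu_eq hq.2 hF.isTri_right)
    isUnit_diag := hPos.isUnit_of_coe_mem hS (he ▸ hPos.sqrt_mem _ (hR.lam_mem _ eth))
    isUnit_root := hPos.isUnit_of_coe_mem hS (hτ ▸ hPos.sqrt_mem _ (hF.add_mem hPos hR.lam_mem))
    isUnit_add := hPos.isUnit_of_coe_mem hS <| by
      simpa only [Subring.coe_add, Subring.coe_mul, hφ, he, hτ] using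
        hF.sqrt_mul_sqrt_add_mem hPos hR.lam_mem
    root_mul_self := Subtype.ext <| by
      simpa only [Subring.coe_add, Subring.coe_mul, ha, hb, hc, hd, hτ] using
        hF.sqrt_add_mul_self hPos hR.lam_mem
    new_mul_diag := Subtype.ext <| by
      simpa only [Subring.coe_add, Subring.coe_mul, coe_mul_odd, ha, hb, hc, hd, he, hφ, hθ, hσ]
        using hF.sqrt_lam_mul_self hPos hR.lam_mem
    odd_left := Subtype.ext <| by
      simpa only [AddSubgroup.coe_add, Subring.coe_mul, coe_smul, ha, hb, hc, hd, hτ, hθ, hσ, hθ']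
        using hF.sqrt_add_mul_mu_left hPos hR.lam_mem
    odd_right := Subtype.ext <| by
      simpa only [AddSubgroup.coe_sub, Subring.coe_mul, coe_smul, ha, hb, hc, hd, hτ, hθ, hσ, hσ']
        using hF.sqrt_add_mul_mu_right hPos hR.lam_mem }

theorem mu_new_mem : st'.mu {t, y, s} ∈ S.odd ∧ st'.mu {y, h, s} ∈ S.odd := by
  obtain ⟨hty, hyh, hhs, hts⟩ := hF.lam_sides_mem hR.lam_mem
  have hroot := hPos.sqrt_mem _ (hF.add_mem hPos hR.lam_mem)
  have hθ := hR.mu_mem _ hF.isTri_left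
  have hσ := hR.mu_mem _ hF.isTri_right
  have hsqrt {x : A} (hx : x ∈ Pos) : sqrt x ∈ S.even := hS (hPos.sqrt_mem x hx)
  have hac := mul_mem (hsqrt hty) (hsqrt hhs)
  have hbd := mul_mem (hsqrt hyh) (hsqrt hts)
  refine ⟨hPos.mem_odd_of_mul_mem hS hroot ?_, hPos.mem_odd_of_mul_mem hS hroot ?_⟩
  · rw [hF.sqrt_add_mul_mu_left hPos hR.lam_mem]
    exact S.odd.add_mem (S.even_mul_odd _ hbd _ hθ) (S.even_mul_odd _ hac _ hσ)
  · rw [hF.sqrt_add_mul_mu_right hPos hR.lam_mem]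
    exact S.odd.sub_mem (S.even_mul_odd _ hbd _ hσ) (S.even_mul_odd _ hac _ hθ)

theorem realizes_new : st'.lam s(y, s) = ((side y s • pairing (v y) (v s) : S.even) : A) ∧
    RealizesTri sqrt v (flipSign ε t y h s) st' t y s ∧
    RealizesTri sqrt v (flipSign ε t y h s) st' y h s := by
  have hq := hF.quad
  have hside := side_mul_side hq.sbtw₄₁₂.cyclic_left
  obtain ⟨hty, hyh, hhs, hts⟩ := hF.lam_sides_mem hR.lam_mem
  have root {x : A} (hx : x ∈ Pos) : ∃ r : S.even, (r : A) = sqrt x :=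
    ⟨⟨_, hS (hPos.sqrt_mem x hx)⟩, rfl⟩
  obtain ⟨a, ha⟩ := root hty
  obtain ⟨b, hb⟩ := root hyh
  obtain ⟨c, hc⟩ := root hhs
  obtain ⟨d, hd⟩ := root hts
  obtain ⟨e, he⟩ := root (hR.lam_mem _ (Or.inr hF.diag_mem))
  obtain ⟨φ, hφ⟩ := root hF.lam_mem
  obtain ⟨τ, hτ⟩ := root (hF.add_mem hPos hR.lam_mem)
  obtain ⟨hθ', hσ'⟩ := hF.mu_new_mem hPos hR hS
  have hQ := hF.isPtolemyQuad hPos hR hS ha hb hc hd he hφ hτ (θ := ⟨_, hR.mu_mem _ hF.isTri_left⟩)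
    rfl (σ := ⟨_, hR.mu_mem _ hF.isTri_right⟩) rfl (θ' := ⟨_, hθ'⟩) rfl (σ' := ⟨_, hσ'⟩) rfl
  have hold : st'.lam s(t, y) = st.lam s(t, y) ∧ st'.lam s(y, h) = st.lam s(y, h) ∧
      st'.lam s(h, s) = st.lam s(h, s) ∧ st'.lam s(t, s) = st.lam s(t, s) := by
    simp only [Quad, Fin.sbtw_iff] at hq
    refine ⟨hF.lam_eq _ ?_, hF.lam_eq _ ?_, hF.lam_eq _ ?_, hF.lam_eq _ ?_⟩ <;>
      simp only [ne_eq, Sym2.eq_iff] <;> omega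
  refine ⟨(lam_eq_side_smul_pairing_iff hside ?_).2 hQ.pairing_new,
    (realizesTri_iff (hold.1 ▸ ha) hφ (hold.2.2.2 ▸ hd) rfl
      (sign_flip_left hq ε)).2 hQ.odd_TYS,
    (realizesTri_iff (hold.2.1 ▸ hb) (hold.2.2.1 ▸ hc) hφ rfl
      (hF.sign_flip_right hR.signRel)).2 hQ.odd_YHS⟩
  rw [hφ, hPos.sqrt_mul_self _ hF.lam_mem]

theorem realizesTri (habc : sbtw a b c) (hT : IsTri st'.diag {a, b, c}) :
    RealizesTri sqrt v (flipSign ε t y h s) st' a b c := by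
  have hq := hF.quad
  obtain ⟨-, hleft, hright⟩ := hF.realizes_new hPos hR hS
  obtain ⟨hty, hyh, hhs, -⟩ := hF.isEdgeOf_sides_flip
  have hlam {e : Edg N} (he : isEdgeOf st'.diag e) := hF.lam_flip_mem hR.lam_mem he
  by_cases hleft_eq : ({a, b, c} : Finset (Fin N)) = {t, y, s}
  · exact hleft.of_triple_eq hPos habc hq.sbtw₄₁₂.cyclic_left hleft_eq (hlam hty)
      (hlam hF.isEdgeOf_new)
  by_cases hright_eq : ({a, b, c} : Finset (Fin N)) = {y, h, s}
  · exact hright.of_triple_eq hPos habc hq.sbtw₂₃₄ hright_eq (hlam hyh) (hlam hhs)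
  have hold := ((hF.isTri_or hR.nonCrossing hT).resolve_left hleft_eq).resolve_left hright_eq
  have hlam_eq {e : Edg N} (he : isEdgeOf st.diag e) : st'.lam e = st.lam e :=
    hF.lam_eq e fun heq => hR.nonCrossing hq (Or.inr hF.diag_mem) (heq ▸ he)
  obtain ⟨hab, hbc, hca⟩ := (isTri_iff habc).1 hold
  rw [RealizesTri, hlam_eq hab, hlam_eq hbc, hlam_eq (Sym2.eq_swap ▸ hca), hF.mu_eq _ hleft_eq
    hright_eq, hR.mu_eq habc hold, flipSign, if_neg hleft_eq, if_neg hright_eq]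

theorem realizes : Realizes Pos sqrt v (flipSign ε t y h s) st' where
  nonCrossing := hF.nonCrossing hR.nonCrossing
  signRel := hF.signRel hR.signRel hR.nonCrossing
  lam_mem _ he := hF.lam_flip_mem hR.lam_mem he
  lam_eq a b hab he := by
    obtain ⟨-, -, hsy⟩ := sbtw_pairwise_ne hF.quad.sbtw₂₃₄
    have hnew := (hF.realizes_new hPos hR hS).1
    by_cases hne : s(a, b) = s(y, s)
    · rcases Sym2.eq_iff.1 hne with ⟨rfl, rfl⟩ | ⟨rfl, rfl⟩
      · exact hnew
      · rw [Sym2.eq_swap, hnew, pairing_swap, side_swap hsy, Units.neg_smul, smul_neg, neg_neg]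
    · exact hF.lam_eq _ hne ▸ hR.lam_eq hab (hF.isEdgeOf_of_isEdgeOf_flip he hne)
  mu_mem T hT := by
    by_cases hleft : T = {t, y, s}
    · exact hleft ▸ (hF.mu_new_mem hPos hR hS).1
    by_cases hright : T = {y, h, s}
    · exact hright ▸ (hF.mu_new_mem hPos hR hS).2
    rw [hF.mu_eq T hleft hright]
    exact hR.mu_mem T (((hF.isTri_or hR.nonCrossing hT).resolve_left hleft).resolve_left hright)
  mu_eq _ _ _ := hF.realizesTri hPos hR hS

end Realizes

end IsPtolemyFlip

theorem Realizes.exists_of_reflTransGen (hPos : IsSqrtCone Pos sqrt) (hS : Pos ⊆ S.even)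
    (hR : Realizes Pos sqrt v ε st) (hreach : Relation.ReflTransGen (Flip Pos sqrt) st st') :
    ∃ ε', Realizes Pos sqrt v ε' st' := by
  induction hreach with
  | refl => exact ⟨ε, hR⟩
  | tail _ hflip ih =>
    obtain ⟨ε', hR'⟩ := ih
    obtain ⟨t, y, h, s, hF⟩ := hflip.exists_isPtolemyFlip
    exact ⟨_, hF.realizes hPos hR' hS⟩

end Realization

section Existence

variable {N : ℕ} [NeZero N] {D : Finset (Edg N)} {i j k a b c : Fin N}

/-- The polygon with vertices `i, i + 1, …, j` is triangulated by edges of `D`. -/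
inductive Triangulated (D : Finset (Edg N)) : Fin N → Fin N → Prop
  | side {i j : Fin N} (h : i.val + 1 = j.val) : Triangulated D i j
  | glue {i k j : Fin N} (hik : i < k) (hkj : k < j) (he : isEdgeOf D s(i, j))
      (hl : Triangulated D i k) (hr : Triangulated D k j) : Triangulated D i j

theorem isBnd_of_val_add_one_eq (h : i.val + 1 = j.val) : isBnd s(i, j) := by
  refine ⟨i, ?_⟩
  rw [show j = i + 1 from Fin.ext (by have := val_add_one_eq i; omega)]

theorem Triangulated.isEdgeOf_base (h : Triangulated D i j) : isEdgeOf D s(i, j) := by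
  cases h with
  | side h => exact Or.inl (isBnd_of_val_add_one_eq h)
  | glue _ _ he => exact he

theorem NonCrossing.edge_cases (hD : NonCrossing D) (hik : isEdgeOf D s(i, k))
    (hkj : isEdgeOf D s(k, j)) (hab : isEdgeOf D s(a, b)) (hia : i ≤ a) (hlt : a < b)
    (hbj : b ≤ j) : b ≤ k ∨ k ≤ a ∨ a = i ∧ b = j := by
  by_contra! h
  rcases hia.eq_or_lt with rfl | hia
  · exact hD (.of_lt h.2.1 h.1 (hbj.lt_of_ne (h.2.2 rfl))) hab hkj
  · exact hD (.of_lt hia h.2.1 h.1) hik hab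

theorem NonCrossing.triangle_cases (hD : NonCrossing D) (hik : isEdgeOf D s(i, k))
    (hkj : isEdgeOf D s(k, j)) (hT : IsTri D {a, b, c}) (hia : i ≤ a) (hab : a < b) (hbc : b < c)
    (hcj : c ≤ j) : c ≤ k ∨ k ≤ a ∨ a = i ∧ b = k ∧ c = j := by
  obtain ⟨eab, ebc, eca⟩ := (isTri_iff (Fin.sbtw_iff.2 (Or.inl ⟨hab, hbc⟩))).1 hT
  have := hD.edge_cases hik hkj eab hia hab (hbc.le.trans hcj)
  have := hD.edge_cases hik hkj ebc (hia.trans hab.le) hbc hcj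
  have := hD.edge_cases hik hkj (Sym2.eq_swap ▸ eca) hia (hab.trans hbc) hcj
  omega

section Counting

open Classical in
/-- The edges of `D` inside the polygon with vertices `i, i + 1, …, j`, other than its sides of the
form `s(a, a + 1)`. -/
noncomputable def chords (D : Finset (Edg N)) (i j : Fin N) : Finset (Fin N × Fin N) :=
  {p | i ≤ p.1 ∧ p.1.val + 1 < p.2.val ∧ p.2 ≤ j ∧ isEdgeOf D s(p.1, p.2)}

theorem mem_chords {p : Fin N × Fin N} : p ∈ chords D i j ↔
    i ≤ p.1 ∧ p.1.val + 1 < p.2.val ∧ p.2 ≤ j ∧ isEdgeOf D s(p.1, p.2) := by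
  simp [chords]

theorem NonCrossing.exists_chords_subset (hD : NonCrossing D) (hij : i.val + 1 < j.val) :
    ∃ k, i < k ∧ k < j ∧ chords D i j ⊆ insert (i, j) (chords D i k ∪ chords D k j) := by
  classical
  let apexes : Finset (Fin N) := {k | i < k ∧ k < j ∧ isEdgeOf D s(i, k)}
  have hapex : apexes.Nonempty := by
    refine ⟨⟨i + 1, by omega⟩, ?_⟩
    simp only [apexes, Finset.mem_filter, Finset.mem_univ, true_and]
    exact ⟨Fin.lt_def.2 (by simp), Fin.lt_def.2 hij, Or.inl (isBnd_of_val_add_one_eq rfl)⟩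
  obtain ⟨k, hk, hmax⟩ := apexes.exists_max_image id hapex
  simp only [apexes, Finset.mem_filter, Finset.mem_univ, true_and, id] at hk hmax
  obtain ⟨hik, hkj, eik⟩ := hk
  refine ⟨k, hik, hkj, fun ⟨a, b⟩ hab => ?_⟩
  simp only [Finset.mem_insert, Finset.mem_union, mem_chords, Prod.mk.injEq] at hab ⊢
  obtain ⟨hia, hlt, hbj, eab⟩ := hab
  by_cases hbk : b ≤ k
  · exact Or.inr (Or.inl ⟨hia, hlt, hbk, eab⟩)
  by_cases hka : k ≤ a
  · exact Or.inr (Or.inr ⟨hka, hlt, hbj, eab⟩)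
  rcases hia.eq_or_lt with rfl | hia
  · exact Or.inl ⟨rfl, hbj.eq_or_lt.resolve_right fun h => hbk (hmax b ⟨by omega, h, eab⟩)⟩
  · exact absurd eab (hD (.of_lt hia (not_le.1 hka) (not_le.1 hbk)) eik)

theorem NonCrossing.card_chords_le (hD : NonCrossing D) (hij : i < j) :
    (chords D i j).card + i.val + 1 ≤ j.val ∧
      ((chords D i j).card + i.val + 1 = j.val → Triangulated D i j) := by
  induction hd : j.val - i.val using Nat.strong_induction_on generalizing i j with
  | _ d ih =>
  subst hd
  by_cases hside : i.val + 1 = j.val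
  · have hempty : chords D i j = ∅ := Finset.eq_empty_of_forall_notMem fun p hp => by
      rw [mem_chords] at hp
      omega
    exact ⟨by rw [hempty, Finset.card_empty]; omega, fun _ => .side hside⟩
  obtain ⟨k, hik, hkj, hsub⟩ := hD.exists_chords_subset (i := i) (j := j) (by omega)
  obtain ⟨hl, hl'⟩ := ih _ (by omega) hik rfl
  obtain ⟨hr, hr'⟩ := ih _ (by omega) hkj rfl
  have hunion := Finset.card_union_le (chords D i k) (chords D k j)
  by_cases hmem : (i, j) ∈ chords D i j
  · have hcard := (Finset.card_le_card hsub).trans (Finset.card_insert_le _ _)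
    exact ⟨by omega, fun _ => .glue hik hkj (mem_chords.1 hmem).2.2.2 (hl' (by omega))
      (hr' (by omega))⟩
  · have hcard := Finset.card_le_card ((Finset.subset_insert_iff_of_notMem hmem).1 hsub)
    exact ⟨by omega, fun _ => by omega⟩

theorem IsTriangulation.triangulated (hD : IsTriangulation D) {z : Fin N} (hz : z.val + 1 = N) :
    Triangulated D 0 z := by
  have hcard : D.card + 3 = N := hD.1
  have h0 : (0 : Fin N).val = 0 := rfl
  have hlast : z + 1 = 0 :=
    Fin.ext ((val_add_one_eq z).resolve_left fun h => by have := (z + 1).isLt; omega).1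
  have hbnd : isBnd s((0 : Fin N), z) := ⟨z, by rw [hlast, Sym2.eq_swap]⟩
  obtain ⟨hle, htri⟩ := hD.nonCrossing.card_chords_le (i := 0) (j := z) (by omega)
  refine htri (hle.antisymm ?_)
  have hroot : (0, z) ∈ chords D 0 z := mem_chords.2
    ⟨le_rfl, show (0 : Fin N).val + 1 < z.val by omega, le_rfl, Or.inl hbnd⟩
  have hchord : ∀ ⦃a b⦄, a < b → s(a, b) ∈ D → (a, b) ∈ (chords D 0 z).erase (0, z) := by
    intro a b hab he
    have hne := (hD.2.1 _ he).1
    refine Finset.mem_erase.2 ⟨?_, mem_chords.2 ⟨Fin.zero_le a, ?_, ?_, Or.inr he⟩⟩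
    · rintro ⟨⟩
      exact hne hbnd
    · refine lt_of_le_of_ne hab fun h => hne (isBnd_of_val_add_one_eq h)
    · exact Fin.le_def.2 (by omega)
  have hsub : D ⊆ ((chords D 0 z).erase (0, z)).image fun p => s(p.1, p.2) := by
    intro e he
    obtain ⟨a, b⟩ := e
    rcases lt_trichotomy a b with hab | rfl | hab
    · exact Finset.mem_image.2 ⟨(a, b), hchord hab he, rfl⟩
    · exact absurd rfl (hD.2.1 _ he).2
    · exact Finset.mem_image.2 ⟨(b, a), hchord hab (Sym2.eq_swap ▸ he), Sym2.eq_swap⟩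
  have := (Finset.card_le_card hsub).trans Finset.card_image_le
  have := Finset.card_erase_add_one hroot
  omega

end Counting

end Existence

section TriangleSigns

variable {N : ℕ} [NeZero N] {D : Finset (Edg N)} {t y h s : Fin N}

open Classical in
/-- The diagonals of `D`, as increasing pairs, which separate the triangle `T` from the side between
the last and the first vertex. -/
noncomputable def enclosing (D : Finset (Edg N)) (T : Finset (Fin N)) : Finset (Fin N × Fin N) :=
  {p | p.1 < p.2 ∧ s(p.1, p.2) ∈ D ∧ ∀ x ∈ T, p.1 ≤ x ∧ x ≤ p.2}

open Classical in
/-- Triangle signs trivializing the spin structure of `ori`: the product of the sign changes across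
the diagonals between the triangle `T` and the side between the last and the first vertex. -/
noncomputable def triangleSign (D : Finset (Edg N)) (ori : Edg N → Bool) (T : Finset (Fin N)) :
    ℤˣ :=
  ∏ p ∈ enclosing D T,
    oriSign (ori s(p.1, p.2)) * if ∃ s < p.1, IsTri D {p.2, s, p.1} then -1 else 1

omit [NeZero N] in
theorem mem_enclosing {p : Fin N × Fin N} {T : Finset (Fin N)} : p ∈ enclosing D T ↔
    p.1 < p.2 ∧ s(p.1, p.2) ∈ D ∧ ∀ x ∈ T, p.1 ≤ x ∧ x ≤ p.2 := by
  simp [enclosing]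

theorem NonCrossing.mem_enclosing_iff (hD : NonCrossing D) (hq : Quad t y h s) (hlt : t < h)
    (hth : s(t, h) ∈ D) (hT : IsTri D {h, s, t}) {p : Fin N × Fin N} :
    p ∈ enclosing D {t, y, h} ↔ p = (t, h) ∨ p ∈ enclosing D {h, s, t} := by
  obtain ⟨a, b⟩ := p
  obtain ⟨hhs, hst, -⟩ := (isTri_iff hq.sbtw₃₄₁).1 hT
  simp only [mem_enclosing, Finset.mem_insert, Finset.mem_singleton, forall_eq_or_imp, forall_eq,
    Prod.mk.injEq]
  have hq' := hq
  simp only [Quad, Fin.sbtw_iff] at hq'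
  constructor
  · rintro ⟨hab, habD, hta, -, hhb⟩
    refine or_iff_not_imp_left.2 fun hne => ⟨hab, habD, hhb, ?_, hta⟩
    by_contra hs
    obtain ⟨h, rfl, hbs⟩ | h | ⟨hsa, rfl, hhb⟩ | h : (a < t ∧ b = h ∧ b < s) ∨
        (a < h ∧ h < b ∧ b < s) ∨ (s < a ∧ a = t ∧ h < b) ∨ (s < a ∧ a < t ∧ t < b) := by omega
    · exact hD (.of_lt h hlt hbs) (Or.inr habD) (Sym2.eq_swap ▸ hst)
    · exact hD (.of_lt h.1 h.2.1 h.2.2) (Or.inr habD) hhs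
    · exact hD (.of_lt hsa hlt hhb) (Sym2.eq_swap ▸ hhs) (Or.inr habD)
    · exact hD (.of_lt h.1 h.2.1 h.2.2) hst (Or.inr habD)
  · rintro (⟨rfl, rfl⟩ | ⟨hab, habD, hhb, hs, hta⟩)
    · exact ⟨hlt, hth, by omega⟩
    · exact ⟨hab, habD, by omega⟩

theorem NonCrossing.triangleSign_eq (hD : NonCrossing D) (hq : Quad t y h s) (hlt : t < h)
    (hth : s(t, h) ∈ D) (hT : IsTri D {h, s, t}) (ori : Edg N → Bool) :
    triangleSign D ori {t, y, h} =
      oriSign (ori s(t, h)) * side h s * triangleSign D ori {h, s, t} := by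
  classical
  have hnotMem : (t, h) ∉ enclosing D {h, s, t} := fun hmem => by
    have hs : t ≤ s ∧ s ≤ h := (mem_enclosing.1 hmem).2.2 s (by simp)
    have := hq.sbtw₃₄₁
    rw [Fin.sbtw_iff] at this
    omega
  have henclosing : enclosing D {t, y, h} = insert (t, h) (enclosing D {h, s, t}) :=
    Finset.ext fun p => by rw [hD.mem_enclosing_iff hq hlt hth hT, Finset.mem_insert]
  have hside : (if ∃ x < t, IsTri D {h, x, t} then -1 else 1) = side h s := by
    refine if_congr ⟨?_, fun hsh => ⟨s, ?_, hT⟩⟩ rfl rfl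
    · rintro ⟨x, hxt, hx⟩
      obtain rfl := hx.apex_unique hD hT (Fin.sbtw_iff.2 (by omega)) hq.sbtw₃₄₁
      exact hxt.trans hlt
    · have := hq.sbtw₃₄₁
      rw [Fin.sbtw_iff] at this
      omega
  rw [triangleSign, henclosing, Finset.prod_insert hnotMem, hside, triangleSign]

theorem NonCrossing.signRel_triangleSign (hD : NonCrossing D) (ori : Edg N → Bool) :
    SignRel D ori (triangleSign D ori) := by
  have hrel : ∀ ⦃t y h s⦄, Quad t y h s → t < h → s(t, h) ∈ D → IsTri D {h, s, t} →
      halfSign (triangleSign D ori) t y h * halfSign (triangleSign D ori) h s t =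
        oriSign (ori s(t, h)) := by
    intro t y h s hq hlt hth hT
    have hside : side t y = 1 := if_neg (by
      have := hq.1
      rw [Fin.sbtw_iff] at this
      omega)
    rw [halfSign, halfSign, hside, hD.triangleSign_eq hq hlt hth hT]
    generalize triangleSign D ori {h, s, t} = α, oriSign (ori s(t, h)) = δ, side h s = κ
    revert α δ κ
    decide
  intro t y h s hq hth hl hr
  rcases lt_or_gt_of_ne (sbtw_pairwise_ne hq.1).2.2 with hht | hth'
  · rw [mul_comm, Sym2.eq_swap]
    exact hrel hq.rotate.rotate hht (Sym2.eq_swap ▸ hth) hl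
  · exact hrel hq hth' hth hr

end TriangleSigns

section Decoration

open SuperVec

variable {E O : Type*} [CommRing E] [AddCommGroup O] [Module E O] [OddProduct E O]
  {N : ℕ} [NeZero N] {D : Finset (Edg N)} {ℓ : Edg N → E} {ω : Fin N → Fin N → Fin N → O}
  {v v' : Fin N → SuperVec E O} {i j k : Fin N}

/-- The vectors `v` have the pairings `ℓ` along the edges and the odd invariants `ω` on the
triangles of `D` inside the polygon with vertices `i, i + 1, …, j`. -/
structure DecoratesOn (D : Finset (Edg N)) (ℓ : Edg N → E) (ω : Fin N → Fin N → Fin N → O)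
    (i j : Fin N) (v : Fin N → SuperVec E O) : Prop where
  pairing_eq : ∀ ⦃a b⦄, i ≤ a → a < b → b ≤ j → isEdgeOf D s(a, b) → pairing (v a) (v b) = ℓ s(a, b)
  oddInvariant_eq : ∀ ⦃a b c⦄, i ≤ a → a < b → b < c → c ≤ j → IsTri D {a, b, c} →
    oddInvariant (v a) (v b) (v c) = ω a b c

theorem DecoratesOn.congr (h : DecoratesOn D ℓ ω i j v) (hv : ∀ x, i ≤ x → x ≤ j → v' x = v x) :
    DecoratesOn D ℓ ω i j v' where
  pairing_eq a b hia hab hbj he := by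
    rw [hv a hia (hab.le.trans hbj), hv b (hia.trans hab.le) hbj, h.pairing_eq hia hab hbj he]
  oddInvariant_eq a b c hia hab hbc hcj hT := by
    rw [hv a hia (hab.le.trans (hbc.le.trans hcj)), hv b (hia.trans hab.le) (hbc.le.trans hcj),
      hv c (hia.trans (hab.trans hbc).le) hcj, h.oddInvariant_eq hia hab hbc hcj hT]

theorem DecoratesOn.glue (hD : NonCrossing D) (hik : isEdgeOf D s(i, k))
    (hkj : isEdgeOf D s(k, j)) (hl : DecoratesOn D ℓ ω i k v) (hr : DecoratesOn D ℓ ω k j v)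
    (hpair : pairing (v i) (v j) = ℓ s(i, j))
    (hodd : oddInvariant (v i) (v k) (v j) = ω i k j) : DecoratesOn D ℓ ω i j v where
  pairing_eq a b hia hab hbj he := by
    rcases hD.edge_cases hik hkj he hia hab hbj with hbk | hka | ⟨rfl, rfl⟩
    · exact hl.pairing_eq hia hab hbk he
    · exact hr.pairing_eq hka hab hbj he
    · exact hpair
  oddInvariant_eq a b c hia hab hbc hcj hT := by
    rcases hD.triangle_cases hik hkj hT hia hab hbc hcj with hck | hka | ⟨rfl, rfl, rfl⟩
    · exact hl.oddInvariant_eq hia hab hbc hck hT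
    · exact hr.oddInvariant_eq hka hab hbc hcj hT
    · exact hodd

theorem Triangulated.exists_decoratesOn (hD : NonCrossing D) (hℓ : ∀ e, isEdgeOf D e → IsUnit (ℓ e))
    (ω : Fin N → Fin N → Fin N → O) (h : Triangulated D i j) {p q : SuperVec E O}
    (hpq : pairing p q = ℓ s(i, j)) : ∃ v, v i = p ∧ v j = q ∧ DecoratesOn D ℓ ω i j v := by
  induction h generalizing p q with
  | @side i j hij =>
    refine ⟨fun x => if x = i then p else q, if_pos rfl, if_neg fun h => by omega, ?_, ?_⟩
    · intro a b hia hab hbj _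
      obtain rfl : a = i := by omega
      obtain rfl : b = j := by omega
      simp only [if_pos, if_neg hab.ne', hpq]
    · intro a b c hia hab hbc hcj
      omega
  | @glue i k j hik hkj he hl hr ihl ihr =>
    obtain ⟨r, hpr, hrq, hprq⟩ := exists_apex (hpq ▸ hℓ _ he) (ℓ s(i, k)) (ℓ s(k, j)) (ω i k j)
    obtain ⟨vl, hli, hlk, hvl⟩ := ihl hpr
    obtain ⟨vr, hrk, hrj, hvr⟩ := ihr hrq
    let v (x : Fin N) : SuperVec E O := if x ≤ k then vl x else vr x
    have hvl' : ∀ x, x ≤ k → v x = vl x := fun x hx => if_pos hx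
    have hvr' : ∀ x, k ≤ x → v x = vr x := fun x hx => by
      rcases hx.eq_or_lt with rfl | hx
      · rw [hvl' _ le_rfl, hlk, hrk]
      · exact if_neg hx.not_ge
    have hvi : v i = p := (hvl' i hik.le).trans hli
    have hvk : v k = r := (hvl' k le_rfl).trans hlk
    have hvj : v j = q := (hvr' j hkj.le).trans hrj
    refine ⟨v, hvi, hvj, .glue hD hl.isEdgeOf_base hr.isEdgeOf_base (hvl.congr fun x _ => hvl' x)
      (hvr.congr fun x hx _ => hvr' x hx) ?_ ?_⟩
    · rw [hvi, hvj, hpq]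
    · rw [hvi, hvk, hvj, hprq]

theorem IsTriangulation.exists_decoration (hD : IsTriangulation D)
    (hℓ : ∀ e, isEdgeOf D e → IsUnit (ℓ e)) (ω : Fin N → Fin N → Fin N → O) :
    ∃ v : Fin N → SuperVec E O,
      (∀ ⦃a b⦄, a < b → isEdgeOf D s(a, b) → pairing (v a) (v b) = ℓ s(a, b)) ∧
      ∀ ⦃a b c⦄, a < b → b < c → IsTri D {a, b, c} → oddInvariant (v a) (v b) (v c) = ω a b c := by
  have hN := NeZero.pos N
  let z : Fin N := ⟨N - 1, by omega⟩
  have hz : z.val + 1 = N := Nat.sub_add_cancel hN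
  obtain ⟨v, -, -, hv⟩ := (hD.triangulated hz).exists_decoratesOn hD.nonCrossing hℓ ω
    (p := (1, 0, 0)) (q := (0, ℓ s(0, z), 0))
    (by simp only [pairing, one_mul, zero_mul, sub_zero, map_zero, add_zero])
  have hle (x : Fin N) : x ≤ z := Fin.le_def.2 (by omega)
  exact ⟨v, fun a b hab he => hv.pairing_eq (Fin.zero_le a) hab (hle b) he,
    fun a b c hab hbc hT => hv.oddInvariant_eq (Fin.zero_le a) hab hbc (hle c) hT⟩

end Decoration

section InitialRealization

open SuperVec SuperSubring

variable {A : Type*} [Ring A] {S : SuperSubring A} {N : ℕ} [NeZero N] {Pos : Set A} {sqrt : A → A}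
  {st : PState A N}

omit [NeZero N] in
theorem exists_sorted_of_sbtw {a b c : Fin N} (h : sbtw a b c) :
    ∃ x y z : Fin N, x < y ∧ y < z ∧ ({a, b, c} : Finset (Fin N)) = {x, y, z} := by
  rcases Fin.sbtw_iff.1 h with h | h | h
  · exact ⟨a, b, c, h.1, h.2, rfl⟩
  · exact ⟨b, c, a, h.1, h.2, triple_rotate a b c⟩
  · exact ⟨c, a, b, h.1, h.2, (triple_rotate c a b).symm⟩

theorem realizes_of_lt (hPos : IsSqrtCone Pos sqrt) {v : Fin N → SuperVec S.even S.odd}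
    {ε : Finset (Fin N) → ℤˣ} (hD : NonCrossing st.diag) (hε : SignRel st.diag st.ori ε)
    (hlam : ∀ e, isEdgeOf st.diag e → st.lam e ∈ Pos) (hmu : ∀ T, IsTri st.diag T → st.mu T ∈ S.odd)
    (hpair : ∀ ⦃a b⦄, a < b → isEdgeOf st.diag s(a, b) →
      st.lam s(a, b) = (pairing (v a) (v b) : S.even))
    (hodd : ∀ ⦃a b c⦄, a < b → b < c → IsTri st.diag {a, b, c} →
      RealizesTri sqrt v ε st a b c) : Realizes Pos sqrt v ε st := by
  refine ⟨hD, hε, hlam, fun a b hab he => ?_, hmu, fun a b c habc hT => ?_⟩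
  · rcases hab.lt_or_gt with hlt | hlt
    · rw [side, if_neg hlt.not_gt, one_smul, hpair hlt he]
    · rw [side, if_pos hlt, pairing_swap, Units.neg_smul, one_smul, neg_neg, Sym2.eq_swap,
        hpair hlt (Sym2.eq_swap ▸ he)]
  · obtain ⟨x, y, z, hxy, hyz, heq⟩ := exists_sorted_of_sbtw habc
    have hxyz : sbtw x y z := Fin.sbtw_iff.2 (Or.inl ⟨hxy, hyz⟩)
    have hT' := heq ▸ hT
    obtain ⟨exy, eyz, -⟩ := (isTri_iff hxyz).1 hT'
    exact .of_triple_eq hPos habc hxyz heq (hlam _ exy) (hlam _ eyz) (hodd hxy hyz hT')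

theorem exists_realizes (hPos : IsSqrtCone Pos sqrt) (hS : Pos ⊆ S.even)
    (hD : IsTriangulation st.diag) (hlam : ∀ e, isEdgeOf st.diag e → st.lam e ∈ Pos)
    (hmu : ∀ T, IsTri st.diag T → st.mu T ∈ S.odd) :
    ∃ v ε, Realizes (S := S) Pos sqrt v ε st := by
  set ε := triangleSign st.diag st.ori
  have hpair (e : Edg N) : ∃ x : S.even, isEdgeOf st.diag e → st.lam e = x := by
    by_cases he : isEdgeOf st.diag e
    · exact ⟨⟨_, hS (hlam e he)⟩, fun _ => rfl⟩
    · exact ⟨0, fun h => absurd h he⟩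
  have hodd (a b c : Fin N) : ∃ θ : S.odd, a < b → b < c → IsTri st.diag {a, b, c} →
      sqrt (st.lam s(a, b)) * sqrt (st.lam s(b, c)) * sqrt (st.lam s(a, c)) * st.mu {a, b, c} =
        ((ε {a, b, c} • θ : S.odd) : A) := by
    by_cases h : a < b ∧ b < c ∧ IsTri st.diag {a, b, c}
    · obtain ⟨hab, hbc, hca⟩ := (isTri_iff (Fin.sbtw_iff.2 (Or.inl ⟨h.1, h.2.1⟩))).1 h.2.2
      have hroot (e : Edg N) (he : isEdgeOf st.diag e) : sqrt (st.lam e) ∈ S.even :=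
        hS (hPos.sqrt_mem _ (hlam e he))
      have hmem := S.even_mul_odd _ (mul_mem (mul_mem (hroot _ hab) (hroot _ hbc))
        (hroot _ (Sym2.eq_swap ▸ hca))) _ (hmu _ h.2.2)
      exact ⟨ε {a, b, c} • ⟨_, hmem⟩, fun _ _ _ => by rw [smul_smul, Int.units_mul_self, one_smul]⟩
    · exact ⟨0, fun h₁ h₂ h₃ => absurd ⟨h₁, h₂, h₃⟩ h⟩
  choose ℓ hℓ using hpair
  choose ω hω using hodd
  obtain ⟨v, hv, hv'⟩ := hD.exists_decoration
    (fun e he => hPos.isUnit_of_coe_mem hS (hℓ e he ▸ hlam e he)) ω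
  refine ⟨v, ε, realizes_of_lt hPos hD.nonCrossing (hD.nonCrossing.signRel_triangleSign _) hlam hmu
    (fun a b hab he => ?_) fun a b c hab hbc hT => ?_⟩
  · rw [hv hab he, hℓ _ he]
  · rw [RealizesTri, hv' hab hbc hT, hω a b c hab hbc hT]

end InitialRealization

section Chain

open SuperVec SuperSubring

variable {A : Type*} [Ring A] {S : SuperSubring A} {R : Subring A}
  {V : Type*} {v : V → SuperVec S.even S.odd} {T T' : Finset V} {u : V}

theorem pairing_mem_of_ptolemy {u p q r : SuperVec S.even S.odd} {i : A} (hi : i ∈ R)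
    (hipq : i * (pairing p q : S.even) = 1) (hpq : ((pairing p q : S.even) : A) ∈ R)
    (hup : ((pairing u p : S.even) : A) ∈ R) (huq : ((pairing u q : S.even) : A) ∈ R)
    (hpr : ((pairing p r : S.even) : A) ∈ R) (hqr : ((pairing q r : S.even) : A) ∈ R)
    (hupq : ((oddInvariant u p q : S.odd) : A) ∈ R)
    (hpqr : ((oddInvariant p q r : S.odd) : A) ∈ R) :
    ((pairing u r : S.even) : A) ∈ R := by
  have hptolemy := congrArg Subtype.val (pairing_ptolemy p q u r)
  simp only [Subring.coe_mul, Subring.coe_add, AddSubgroupClass.coe_sub, coe_mul_odd] at hptolemy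
  have hcancel : ((pairing u r : S.even) : A) = i * (i * ((pairing p q : S.even) *
      (pairing p q : S.even) * (pairing u r : S.even))) := by
    rw [mul_assoc, ← mul_assoc i ((pairing p q : S.even) : A), hipq, one_mul, ← mul_assoc, hipq,
      one_mul]
  rw [hcancel, hptolemy]
  exact mul_mem hi (mul_mem hi (add_mem (mul_mem hpq (sub_mem (mul_mem huq hpr) (mul_mem hup hqr)))
    (mul_mem hupq hpqr)))

theorem oddInvariant_mem_of_ptolemy {u p q r : SuperVec S.even S.odd} {i : A} (hi : i ∈ R)
    (hipq : i * (pairing p q : S.even) = 1)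
    (hup : ((pairing u p : S.even) : A) ∈ R) (hpr : ((pairing p r : S.even) : A) ∈ R)
    (hupq : ((oddInvariant u p q : S.odd) : A) ∈ R)
    (hpqr : ((oddInvariant p q r : S.odd) : A) ∈ R) :
    ((oddInvariant u p r : S.odd) : A) ∈ R := by
  have hptolemy := congrArg Subtype.val (oddInvariant_ptolemy p q u r)
  simp only [coe_smul, AddSubgroup.coe_add] at hptolemy
  have hcancel : ((oddInvariant u p r : S.odd) : A) =
      -(i * ((pairing p q : S.even) * ((oddInvariant p u r : S.odd) : A))) := by
    rw [oddInvariant_swap, ← mul_assoc, hipq, one_mul, AddSubgroup.coe_neg]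
  rw [hcancel, hptolemy, oddInvariant_swap u p q, pairing_swap p u, AddSubgroup.coe_neg,
    Subring.coe_neg]
  exact neg_mem (mul_mem hi (add_mem (mul_mem hpr (neg_mem hupq)) (mul_mem (neg_mem hup) hpqr)))

/-- The pairings and odd invariants of the vectors at the vertices of `T` belong to the subring `R`,
where the pairings at distinct vertices are invertible. -/
structure IsIntegralOn (R : Subring A) (v : V → SuperVec S.even S.odd) (T : Finset V) : Prop where
  pairing_mem : ∀ p ∈ T, ∀ q ∈ T, ((pairing (v p) (v q) : S.even) : A) ∈ R
  exists_inverse : ∀ p ∈ T, ∀ q ∈ T, p ≠ q → ∃ i ∈ R, i * (pairing (v p) (v q) : S.even) = 1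
  oddInvariant_mem : ∀ p ∈ T, ∀ q ∈ T, ∀ r ∈ T, ((oddInvariant (v p) (v q) (v r) : S.odd) : A) ∈ R

/-- The pairings and odd invariants of the vector at `u` with the vectors at the vertices of `T`
belong to the subring `R`. -/
structure IsIntegralFrom (R : Subring A) (v : V → SuperVec S.even S.odd) (u : V) (T : Finset V) :
    Prop where
  pairing_mem : ∀ p ∈ T, ((pairing (v u) (v p) : S.even) : A) ∈ R
  oddInvariant_mem : ∀ p ∈ T, ∀ q ∈ T, ((oddInvariant (v u) (v p) (v q) : S.odd) : A) ∈ R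

theorem IsIntegralOn.isIntegralFrom (hT : IsIntegralOn R v T) (hu : u ∈ T) :
    IsIntegralFrom R v u T :=
  ⟨hT.pairing_mem u hu, hT.oddInvariant_mem u hu⟩

theorem of_mem_triple_of_symm {P : V → V → V → Prop} (rotate : ∀ {x y z}, P x y z → P y z x)
    (swap : ∀ {x y z}, P x y z → P y x z) (self_left : ∀ x y, P x x y) {a b c : V} (h : P a b c)
    {x y z : V} (hx : x = a ∨ x = b ∨ x = c) (hy : y = a ∨ y = b ∨ y = c)
    (hz : z = a ∨ z = b ∨ z = c) : P x y z := by
  rcases hx with rfl | rfl | rfl <;> rcases hy with rfl | rfl | rfl <;>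
    rcases hz with rfl | rfl | rfl <;>
    grind only

theorem IsIntegralFrom.step [DecidableEq V] (hT : IsIntegralFrom R v u T)
    (hT' : IsIntegralOn R v T') (hcard' : T'.card = 3) (hcard : 1 < (T ∩ T').card) :
    IsIntegralFrom R v u T' := by
  obtain ⟨p, hp, q, hq, hpq⟩ := Finset.one_lt_card.1 hcard
  rw [Finset.mem_inter] at hp hq
  obtain ⟨r, hr⟩ : ∃ r, (T'.erase p).erase q = {r} := by
    rw [← Finset.card_eq_one, Finset.card_erase_of_mem (Finset.mem_erase.2 ⟨hpq.symm, hq.2⟩),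
      Finset.card_erase_of_mem hp.2, hcard']
  have hrT' : r ∈ T' := Finset.mem_of_mem_erase (Finset.mem_of_mem_erase
    (hr ▸ Finset.mem_singleton_self r))
  have hmem {x : V} (hx : x ∈ T') : x = p ∨ x = q ∨ x = r := by
    by_contra! h
    exact h.2.2 (Finset.mem_singleton.1
      (hr ▸ Finset.mem_erase.2 ⟨h.2.1, Finset.mem_erase.2 ⟨h.1, hx⟩⟩))
  obtain ⟨i, hi, hipq⟩ := hT'.exists_inverse p hp.2 q hq.2 hpq
  obtain ⟨j, hj, hjqp⟩ := hT'.exists_inverse q hq.2 p hp.2 hpq.symm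
  have hpair (x) (hx : x ∈ T') := hT'.pairing_mem x hx r hrT'
  have hupq := hT.oddInvariant_mem p hp.1 q hq.1
  have huqp := hT.oddInvariant_mem q hq.1 p hp.1
  have hur := pairing_mem_of_ptolemy hi hipq (hT'.pairing_mem p hp.2 q hq.2)
    (hT.pairing_mem p hp.1) (hT.pairing_mem q hq.1) (hpair p hp.2) (hpair q hq.2) hupq
    (hT'.oddInvariant_mem p hp.2 q hq.2 r hrT')
  have hupr := oddInvariant_mem_of_ptolemy hi hipq (hT.pairing_mem p hp.1) (hpair p hp.2) hupq
    (hT'.oddInvariant_mem p hp.2 q hq.2 r hrT')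
  have huqr := oddInvariant_mem_of_ptolemy hj hjqp (hT.pairing_mem q hq.1) (hpair q hq.2) huqp
    (hT'.oddInvariant_mem q hq.2 p hp.2 r hrT')
  refine ⟨fun x hx => ?_, fun x hx y hy => ?_⟩
  · rcases hmem hx with rfl | rfl | rfl
    exacts [hT.pairing_mem x hp.1, hT.pairing_mem x hq.1, hur]
  · have hself (x : V) : ((oddInvariant (v u) (v x) (v x) : S.odd) : A) ∈ R :=
      oddInvariant_self_right (v u) (v x) ▸ R.zero_mem
    have hswap {x y : V} (h : ((oddInvariant (v u) (v x) (v y) : S.odd) : A) ∈ R) :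
        ((oddInvariant (v u) (v y) (v x) : S.odd) : A) ∈ R := by
      rw [← oddInvariant_rotate, oddInvariant_swap, oddInvariant_rotate]
      exact neg_mem h
    rcases hmem hx with rfl | rfl | rfl <;> rcases hmem hy with rfl | rfl | rfl
    exacts [hself _, hupq, hupr, huqp, hself _, huqr, hswap hupr, hswap huqr, hself _]

end Chain

section Laurent

open SuperVec SuperSubring

variable {A : Type*} [Ring A] {S : SuperSubring A} {R : Subring A} {N m : ℕ} [NeZero N]
  {Pos : Set A} {sqrt : A → A} {st st' : PState A N} {v : Fin N → SuperVec S.even S.odd}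
  {ε : Finset (Fin N) → ℤˣ} {a b c : Fin N}

theorem units_smul_mem_iff {κ : ℤˣ} {x : A} : κ • x ∈ R ↔ x ∈ R := by
  rcases Int.units_eq_one_or κ with rfl | rfl
  · rw [one_smul]
  · rw [Units.neg_smul, one_smul, neg_mem_iff]

namespace Realizes

theorem lam_mem_iff (hR : Realizes Pos sqrt v ε st) (hab : a ≠ b)
    (he : isEdgeOf st.diag s(a, b)) :
    st.lam s(a, b) ∈ R ↔ ((pairing (v a) (v b) : S.even) : A) ∈ R := by
  rw [hR.lam_eq hab he]
  exact units_smul_mem_iff (κ := side a b)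

theorem oddInvariant_mem (hPos : IsSqrtCone Pos sqrt) (hR : Realizes Pos sqrt v ε st)
    (hT : IsTri st.diag {a, b, c})
    (hmu : sqrt (st.lam s(a, b)) * sqrt (st.lam s(b, c)) * sqrt (st.lam s(a, c)) *
      st.mu {a, b, c} ∈ R) : ((oddInvariant (v a) (v b) (v c) : S.odd) : A) ∈ R := by
  obtain ⟨hab, hac, hbc⟩ := Finset.card_triple_eq_three_iff.1 hT.1
  rcases eq_or_sbtw_or_sbtw hab hbc hac.symm with habc | hcba
  · rw [hR.mu_eq habc hT] at hmu
    exact units_smul_mem_iff (κ := ε {a, b, c}).1 hmu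
  · rw [triple_reverse] at hT
    have hcomm := hPos.mul_comm _ (hPos.sqrt_mem _ (hR.lam_mem _
      (hT.2 c (by simp) b (by simp) hbc.symm)))
    have hrealizes := hR.mu_eq hcba hT
    rw [RealizesTri, ← triple_reverse a b c, hcomm, Sym2.eq_swap (a := b), Sym2.eq_swap (a := c),
      Sym2.eq_swap (a := c)] at hrealizes
    rw [hrealizes] at hmu
    rw [← oddInvariant_rotate, oddInvariant_swap]
    exact neg_mem (units_smul_mem_iff (κ := ε {a, b, c}).1 hmu)

theorem isIntegralOn (hPos : IsSqrtCone Pos sqrt) (hR : Realizes Pos sqrt v ε st)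
    (hlam : ∀ e, isEdgeOf st.diag e → st.lam e ∈ R)
    (hinv : ∀ e, isEdgeOf st.diag e → Ring.inverse (st.lam e) ∈ R) (hT : IsTri st.diag {a, b, c})
    (hmu : sqrt (st.lam s(a, b)) * sqrt (st.lam s(b, c)) * sqrt (st.lam s(a, c)) *
      st.mu {a, b, c} ∈ R) : IsIntegralOn R v {a, b, c} where
  pairing_mem p hp q hq := by
    rcases eq_or_ne p q with rfl | hpq
    · rw [pairing_self]
      exact R.zero_mem
    · have he := hT.2 p hp q hq hpq
      exact (hR.lam_mem_iff hpq he).1 (hlam _ he)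
  exists_inverse p hp q hq hpq := by
    have he := hT.2 p hp q hq hpq
    refine ⟨side p q • Ring.inverse (st.lam s(p, q)), units_smul_mem_iff.2 (hinv _ he), ?_⟩
    have hcancel := Ring.inverse_mul_cancel _ (hPos.isUnit _ (hR.lam_mem _ he))
    have hpair : ((pairing (v p) (v q) : S.even) : A) = side p q • st.lam s(p, q) := by
      rw [hR.lam_eq hpq he]
      change _ = side p q • side p q • ((pairing (v p) (v q) : S.even) : A)
      rw [smul_smul, Int.units_mul_self, one_smul]
    rw [hpair, smul_mul_smul_comm, Int.units_mul_self, one_smul, hcancel]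
  oddInvariant_mem p hp q hq r hr := by
    simp only [Finset.mem_insert, Finset.mem_singleton] at hp hq hr
    exact of_mem_triple_of_symm
      (P := fun x y z => ((oddInvariant (v x) (v y) (v z) : S.odd) : A) ∈ R)
      (fun {x y z} h => oddInvariant_rotate (v x) (v y) (v z) ▸ h)
      (fun {x y z} h => oddInvariant_swap (v x) (v y) (v z) ▸ neg_mem h)
      (fun x y => oddInvariant_self_left (v x) (v y) ▸ R.zero_mem)
      (hR.oddInvariant_mem hPos hT hmu) hp hq hr

end Realizes

theorem IsIntegralOn.isIntegralFrom_chain {V : Type*} [DecidableEq V]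
    {v : V → SuperVec S.even S.odd} {u : V} {tri : Fin (m + 1) → Finset V}
    (htri : ∀ k, IsIntegralOn R v (tri k)) (hcard : ∀ k, (tri k).card = 3)
    (hchain : ∀ k : Fin m, 1 < (tri k.castSucc ∩ tri k.succ).card) (hu : u ∈ tri 0)
    (k : Fin (m + 1)) : IsIntegralFrom R v u (tri k) := by
  induction k using Fin.induction with
  | zero => exact (htri 0).isIntegralFrom hu
  | succ k ih => exact ih.step (htri k.succ) (hcard k.succ) (hchain k)

/-- The triangles `tri k = {ctr k, (oth k).1, (oth k).2}` of the triangulation `D`, consecutive ones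
sharing an edge, lead from the vertex `a` to the vertex `b`. -/
structure IsTriangleChain (D : Finset (Edg N)) (tri : Fin (m + 1) → Finset (Fin N))
    (ctr : Fin (m + 1) → Fin N) (oth : Fin (m + 1) → Fin N × Fin N) (a b : Fin N) : Prop where
  isTri : ∀ k, IsTri D (tri k)
  tri_eq : ∀ k, tri k = {ctr k, (oth k).1, (oth k).2}
  one_lt_card_inter : ∀ k : Fin m, 1 < (tri k.castSucc ∩ tri k.succ).card
  left_mem : a ∈ tri 0
  right_mem : b ∈ tri (Fin.last m)

variable {tri : Fin (m + 1) → Finset (Fin N)} {ctr : Fin (m + 1) → Fin N}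
  {oth : Fin (m + 1) → Fin N × Fin N}

theorem lam_mem_of_isTriangleChain (hPos : IsSqrtCone Pos sqrt) (hD : IsTriangulation st.diag)
    (hchain : IsTriangleChain st.diag tri ctr oth a b)
    (hlam : ∀ e, isEdgeOf st.diag e → st.lam e ∈ Pos)
    (hmu_sq : ∀ T, IsTri st.diag T → st.mu T * st.mu T = 0)
    (hmu_anti : ∀ T T', IsTri st.diag T → IsTri st.diag T' →
      st.mu T * st.mu T' = -(st.mu T' * st.mu T))
    (hreach : Relation.ReflTransGen (Flip Pos sqrt) st st') (hab : a ≠ b)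
    (hmem : isEdgeOf st'.diag s(a, b)) (hlam_mem : ∀ e, isEdgeOf st.diag e → st.lam e ∈ R)
    (hinv_mem : ∀ e, isEdgeOf st.diag e → Ring.inverse (st.lam e) ∈ R)
    (hmu_mem : ∀ k, sqrt (st.lam s(ctr k, (oth k).1)) * sqrt (st.lam s((oth k).1, (oth k).2)) *
      sqrt (st.lam s(ctr k, (oth k).2)) * st.mu (tri k) ∈ R) : st'.lam s(a, b) ∈ R := by
  obtain ⟨S, hcenter, hodd⟩ := exists_center_le_even_and_subset_odd
    (s := st.mu '' {T | IsTri st.diag T})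
    (by rintro _ ⟨T, hT, rfl⟩ _ ⟨T', hT', rfl⟩; exact hmu_anti T T' hT hT')
    (by rintro _ ⟨T, hT, rfl⟩; exact hmu_sq T hT)
  have hS : Pos ⊆ S.even := fun x hx =>
    hcenter (Subring.mem_center_iff.2 fun y => (hPos.mul_comm x hx y).symm)
  obtain ⟨v, ε, hR⟩ := exists_realizes hPos hS hD hlam fun T hT => hodd (Set.mem_image_of_mem _ hT)
  obtain ⟨ε', hR'⟩ := hR.exists_of_reflTransGen hPos hS hreach
  have htri (k : Fin (m + 1)) : IsIntegralOn R v (tri k) := by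
    rw [hchain.tri_eq k]
    exact hR.isIntegralOn hPos hlam_mem hinv_mem (hchain.tri_eq k ▸ hchain.isTri k)
      (hchain.tri_eq k ▸ hmu_mem k)
  exact (hR'.lam_mem_iff hab hmem).2 ((IsIntegralOn.isIntegralFrom_chain htri
    (fun k => (hchain.isTri k).1) hchain.one_lt_card_inter hchain.left_mem _).pairing_mem b
    hchain.right_mem)

theorem super_laurent_phenomenon_general (hPos : IsSqrtCone Pos sqrt)
    (hD : IsTriangulation st.diag) (hchain : IsTriangleChain st.diag tri ctr oth a b)
    (hlam : ∀ e, isEdgeOf st.diag e → st.lam e ∈ Pos)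
    (hmu_sq : ∀ T, IsTri st.diag T → st.mu T * st.mu T = 0)
    (hmu_anti : ∀ T T', IsTri st.diag T → IsTri st.diag T' →
      st.mu T * st.mu T' = -(st.mu T' * st.mu T))
    (hreach : Relation.ReflTransGen (Flip Pos sqrt) st st') (hab : a ≠ b)
    (hmem : isEdgeOf st'.diag s(a, b)) :
    st'.lam s(a, b) ∈ Subring.closure
        ((st.lam '' {e | isEdgeOf st.diag e})
          ∪ (Ring.inverse '' (st.lam '' {e | isEdgeOf st.diag e}))
          ∪ Set.range (fun k : Fin (m + 1) =>
              sqrt (st.lam s((oth k).1, (oth k).2) *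
                Ring.inverse (st.lam s(ctr k, (oth k).1) * st.lam s(ctr k, (oth k).2)))
                * st.mu (tri k)))
    ∧ st'.lam s(a, b) ∈ Subring.closure
        (((fun e => sqrt (st.lam e)) '' {e | isEdgeOf st.diag e})
          ∪ (Ring.inverse '' ((fun e => sqrt (st.lam e)) '' {e | isEdgeOf st.diag e}))
          ∪ {x | ∃ T : Finset (Fin N), IsTri st.diag T ∧ x = st.mu T}) := by
  have hedge (k : Fin (m + 1)) : isEdgeOf st.diag s(ctr k, (oth k).1) ∧
      isEdgeOf st.diag s((oth k).1, (oth k).2) ∧ isEdgeOf st.diag s(ctr k, (oth k).2) := by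
    have hT : IsTri st.diag {ctr k, (oth k).1, (oth k).2} := hchain.tri_eq k ▸ hchain.isTri k
    obtain ⟨hc₁, hc₂, h₁₂⟩ := Finset.card_triple_eq_three_iff.1 hT.1
    exact ⟨hT.2 _ (by simp) _ (by simp) hc₁, hT.2 _ (by simp) _ (by simp) h₁₂,
      hT.2 _ (by simp) _ (by simp) hc₂⟩
  constructor <;>
    refine lam_mem_of_isTriangleChain hPos hD hchain hlam hmu_sq hmu_anti hreach hab hmem
      (fun e he => ?_) (fun e he => ?_) fun k => ?_
  · exact Subring.subset_closure (.inl (.inl ⟨e, he, rfl⟩))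
  · exact Subring.subset_closure (.inl (.inr ⟨_, ⟨e, he, rfl⟩, rfl⟩))
  · obtain ⟨hx, hy, hz⟩ := hedge k
    rw [hPos.sqrt_mul_sqrt_mul_sqrt (hlam _ hx) (hlam _ hy) (hlam _ hz), mul_assoc]
    exact mul_mem (mul_mem (Subring.subset_closure (.inl (.inl ⟨_, hx, rfl⟩)))
      (Subring.subset_closure (.inl (.inl ⟨_, hz, rfl⟩)))) (Subring.subset_closure (.inr ⟨k, rfl⟩))
  · rw [← hPos.sqrt_mul_self _ (hlam e he)]
    refine mul_mem ?_ ?_ <;> exact Subring.subset_closure (.inl (.inl ⟨e, he, rfl⟩))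
  · rw [hPos.inverse_eq_inverse_sqrt_mul_self (hlam e he)]
    refine mul_mem ?_ ?_ <;> exact Subring.subset_closure (.inl (.inr ⟨_, ⟨e, he, rfl⟩, rfl⟩))
  · obtain ⟨hx, hy, hz⟩ := hedge k
    exact mul_mem (mul_mem (mul_mem (Subring.subset_closure (.inl (.inl ⟨_, hx, rfl⟩)))
      (Subring.subset_closure (.inl (.inl ⟨_, hy, rfl⟩))))
      (Subring.subset_closure (.inl (.inl ⟨_, hz, rfl⟩))))
      (Subring.subset_closure (.inr ⟨_, hchain.isTri k, rfl⟩))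

end Laurent

/-- Corollary 5.12 of the paper: the super Laurent phenomenon.
Let `T` be a triangulation of the `(n+3)`-gon with the default orientation, and
let `a, b` be any pair of vertices of the polygon; `m` is the number of internal
diagonals crossed by the arc `(a,b)`, and `tri, ctr, oth, dsp` record the faces
met by the arc, their fan centers, and the crossed diagonals in order.  Let
`θ̃_k = wt(σ_k) = √(x_j/(x_k x_l))·μ(tri k)` be the weight of the `σ`-edge of
the `k`-th face met by the arc.  Then the `λ`-length of `(a,b)` — obtained from
the initial data by any sequence of super Ptolemy flips producing a
triangulation containing `(a,b)` —
(a) lies in the `ℚ`-subalgebra generated by the initial `λ`-lengths `x_i`,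
their inverses, and the `θ̃_k` (each term is a Laurent monomial in the `x_i`
times a monomial in the `θ̃_k`); and
(b) lies in the `ℚ`-subalgebra generated by the square roots `√x_i`, their
inverses, and the `μ`-invariants of the initial triangulation (each term is a
Laurent monomial in the `√x_i` times a monomial in the `θ_i`). -/
theorem super_laurent_phenomenon
    (n m : ℕ)
    (A : Type*) [Ring A] [Algebra ℚ A]
    (Pos : Set A) (sqrt : A → A)
    (hPosAdd : ∀ p ∈ Pos, ∀ q ∈ Pos, p + q ∈ Pos)
    (hPosMul : ∀ p ∈ Pos, ∀ q ∈ Pos, p * q ∈ Pos)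
    (hPosInv : ∀ p ∈ Pos, Ring.inverse p ∈ Pos)
    (hPosCentral : ∀ p ∈ Pos, ∀ x : A, p * x = x * p)
    (hPosUnit : ∀ p ∈ Pos, IsUnit p)
    (hsqrtSq : ∀ p ∈ Pos, sqrt p * sqrt p = p)
    (hsqrtMem : ∀ p ∈ Pos, sqrt p ∈ Pos)
    (hsqrtMul : ∀ p ∈ Pos, ∀ q ∈ Pos, sqrt (p * q) = sqrt p * sqrt q)
    -- the polygon, an arbitrary pair of vertices, and the initial triangulation
    (a b : Fin (n + 3)) (hab : a ≠ b)
    (D0 : Finset (Edg (n + 3))) (hD0 : IsTriangulation D0)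
    -- the combinatorial structure of `D0` along the arc `(a, b)`:
    -- the `m+1` faces met by the arc, in order from `a` to `b`
    (tri : Fin (m + 1) → Finset (Fin (n + 3)))
    (ctr : Fin (m + 1) → Fin (n + 3))
    (oth : Fin (m + 1) → Fin (n + 3) × Fin (n + 3))
    (dsp : Fin m → Fin (n + 3) × Fin (n + 3))
    (htri : ∀ k, IsTri D0 (tri k))
    (htriv : ∀ k, tri k = {ctr k, (oth k).1, (oth k).2})
    (hvdist : ∀ k, ctr k ≠ (oth k).1 ∧ ctr k ≠ (oth k).2 ∧ (oth k).1 ≠ (oth k).2)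
    (ha : a ∈ tri 0) (hb : b ∈ tri (Fin.last m))
    (hdsp : ∀ k : Fin m, (dsp k).1 < (dsp k).2 ∧ s((dsp k).1, (dsp k).2) ∈ D0 ∧
      crossE s((dsp k).1, (dsp k).2) s(a, b))
    (hsep : ∀ k : Fin m, (dsp k).1 ∈ tri k.castSucc ∧ (dsp k).2 ∈ tri k.castSucc ∧
      (dsp k).1 ∈ tri k.succ ∧ (dsp k).2 ∈ tri k.succ)
    -- `dsp` enumerates all the internal diagonals crossed by `(a, b)`
    (hall : ∀ e ∈ D0, crossE e s(a, b) → ∃ k : Fin m, e = s((dsp k).1, (dsp k).2))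
    (horder : ∀ k : Fin m, ∀ j : Fin (m + 1), j.val ≤ k.val → ∀ w ∈ tri j,
      w ≠ (dsp k).1 → w ≠ (dsp k).2 → w ≠ b →
      crossE s((dsp k).1, (dsp k).2) s(w, b))
    (hapex : ∀ k : Fin (m + 1), ∀ h0 : 0 < k.val, ∀ h1 : k.val < m,
      ctr k ∈ s((dsp ⟨k.val - 1, by omega⟩).1, (dsp ⟨k.val - 1, by omega⟩).2) ∧
      ctr k ∈ s((dsp ⟨k.val, h1⟩).1, (dsp ⟨k.val, h1⟩).2))
    (hctr0 : ∀ hm : 0 < m, ctr 0 ∈ s((dsp ⟨0, hm⟩).1, (dsp ⟨0, hm⟩).2))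
    (hctrN : ∀ hm : 0 < m,
      ctr (Fin.last m) ∈ s((dsp ⟨m - 1, by omega⟩).1, (dsp ⟨m - 1, by omega⟩).2))
    (hctr01 : ∀ _ : 2 ≤ m, ctr 0 = ctr ⟨1, by omega⟩)
    (hctrN1 : ∀ _ : 2 ≤ m, ctr (Fin.last m) = ctr ⟨m - 1, by omega⟩)
    -- the default orientation on the crossed diagonals
    (o0 : Edg (n + 3) → Bool)
    (hdef : ∀ k : Fin m,
      o0 s((dsp k).1, (dsp k).2) = decide ((dsp k).1 = ctr k.castSucc))
    -- the initial λ-lengths and μ-invariants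
    (lam0 : Edg (n + 3) → A) (mu0 : Finset (Fin (n + 3)) → A)
    (hlam0 : ∀ e : Edg (n + 3), isEdgeOf D0 e → lam0 e ∈ Pos)
    (hmu0sq : ∀ t : Finset (Fin (n + 3)), IsTri D0 t → mu0 t * mu0 t = 0)
    (hmu0anti : ∀ t t' : Finset (Fin (n + 3)), IsTri D0 t → IsTri D0 t' →
      mu0 t * mu0 t' = -(mu0 t' * mu0 t))
    -- a state obtained from the initial data by any sequence of super Ptolemy
    -- flips, whose triangulation contains the arc `(a, b)`
    (st : PState A (n + 3))
    (hreach : Relation.ReflTransGen (Flip Pos sqrt)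
      ⟨D0, o0, lam0, mu0⟩ st)
    (hmem : isEdgeOf st.diag s(a, b)) :
    st.lam s(a, b) ∈ Algebra.adjoin ℚ
        ((lam0 '' {e | isEdgeOf D0 e})
          ∪ (Ring.inverse '' (lam0 '' {e | isEdgeOf D0 e}))
          ∪ Set.range (fun k : Fin (m + 1) =>
              sqrt (lam0 s((oth k).1, (oth k).2) *
                Ring.inverse (lam0 s(ctr k, (oth k).1) * lam0 s(ctr k, (oth k).2)))
                * mu0 (tri k)))
    ∧ st.lam s(a, b) ∈ Algebra.adjoin ℚ
        (((fun e => sqrt (lam0 e)) '' {e | isEdgeOf D0 e})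
          ∪ (Ring.inverse '' ((fun e => sqrt (lam0 e)) '' {e | isEdgeOf D0 e}))
          ∪ {x | ∃ t : Finset (Fin (n + 3)), IsTri D0 t ∧ x = mu0 t}) := by
  have hPos : IsSqrtCone Pos sqrt := ⟨hPosAdd, hPosMul, hPosInv, hPosCentral, hPosUnit, hsqrtSq,
    hsqrtMem, hsqrtMul⟩
  have hinter (k : Fin m) : 1 < (tri k.castSucc ∩ tri k.succ).card := by
    obtain ⟨h₁, h₂, h₁', h₂'⟩ := hsep k
    exact Finset.one_lt_card.2 ⟨_, Finset.mem_inter.2 ⟨h₁, h₁'⟩, _, Finset.mem_inter.2 ⟨h₂, h₂'⟩,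
      (hdsp k).1.ne⟩
  have closure_le (s : Set A) : Subring.closure s ≤ (Algebra.adjoin ℚ s).toSubring :=
    Subring.closure_le.2 Algebra.subset_adjoin
  exact (super_laurent_phenomenon_general hPos hD0 ⟨htri, htriv, hinter, ha, hb⟩ hlam0 hmu0sq
    hmu0anti hreach hab hmem).imp (closure_le _ ·) (closure_le _ ·)

end SuperTeich
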